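/- arXiv:quant-ph/0502064 — 4 statements merged into one kernel-verified Lean document; each statement's English description precedes it below -/
import Mathlib

section
/- Let ρ and ρ' be density operators on ℂ^d, and let |ψ⟩ ∈ ℂ^d ⊗ ℂ^{d'} with d' ≥ d be a purification of ρ. Then there exists a purification |ψ'⟩ ∈ ℂ^d ⊗ ℂ^{d'} of ρ' such that δ(|ψ⟩⟨ψ|, |ψ'⟩⟨ψ'|) ≤ √(2·δ(ρ, ρ')). -/
open scoped Matrix Kronecker BigOperators ComplexOrder
open Matrix

noncomputable section

/-- The outer product `|v⟩⟨v|` of a vector. -/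
def outerPr {n : Type*} (v : n → ℂ) : Matrix n n ℂ :=
  Matrix.of fun i j => v i * star (v j)

/-- A density operator: positive semidefinite with trace one. -/
def IsDensity {n : Type*} [Fintype n] [DecidableEq n] (ρ : Matrix n n ℂ) : Prop :=
  ρ.PosSemidef ∧ ρ.trace = 1

/-- The eigenvalues of a matrix (as a real vector), `0` if the matrix is not Hermitian. -/
def eigs {n : Type*} [Fintype n] [DecidableEq n] (ρ : Matrix n n ℂ) : n → ℝ :=
  if h : ρ.IsHermitian then h.eigenvalues else 0

/-- Trace distance `δ(ρ,σ) = (1/2) tr|ρ-σ|`. -/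
def traceDist {n : Type*} [Fintype n] [DecidableEq n] (ρ σ : Matrix n n ℂ) : ℝ :=
  (1 / 2) * ∑ i, |eigs (ρ - σ) i|

/-- Von Neumann entropy (base 2). -/
def vnEntropy {n : Type*} [Fintype n] [DecidableEq n] (ρ : Matrix n n ℂ) : ℝ :=
  ∑ i, -(eigs ρ i * Real.logb 2 (eigs ρ i))

/-- Partial trace over the second (right) tensor factor. -/
def ptraceR {m w : Type*} [Fintype w] (M : Matrix (m × w) (m × w) ℂ) : Matrix m m ℂ :=
  Matrix.of fun i j => ∑ k, M (i, k) (j, k)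

/-- Partial trace over the first (left) tensor factor. -/
def ptraceL {m w : Type*} [Fintype m] (M : Matrix (m × w) (m × w) ℂ) : Matrix w w ℂ :=
  Matrix.of fun i j => ∑ k, M (k, i) (k, j)

/-- `ψ` is a purification of `ρ`: a unit vector on `d × w` whose partial trace over `w`
equals `ρ`. -/
def IsPurification {d w : Type*} [Fintype d] [Fintype w]
    (ψ : d × w → ℂ) (ρ : Matrix d d ℂ) : Prop :=
  (∑ i, Complex.normSq (ψ i)) = 1 ∧ ptraceR (outerPr ψ) = ρ

/-- ε-smooth Rényi entropy of order 0 of a distribution. -/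
def H0smooth {X : Type*} [Fintype X] (P : X → ℝ) (ε : ℝ) : ℝ :=
  sInf { r : ℝ | ∃ Q : X → ℝ, (∀ x, 0 ≤ Q x) ∧ (∑ x, |P x - Q x|) ≤ ε ∧
    r = Real.logb 2 (Nat.card {x : X // Q x ≠ 0}) }

/-- ε-smooth Rényi entropy of order 2 of a distribution. -/
def H2smooth {X : Type*} [Fintype X] (P : X → ℝ) (ε : ℝ) : ℝ :=
  sSup { r : ℝ | ∃ Q : X → ℝ, (∀ x, 0 ≤ Q x) ∧ (∑ x, |P x - Q x|) ≤ ε ∧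
    r = -Real.logb 2 (∑ x, Q x ^ 2) }

/-- ε-smooth Rényi entropy of order 0 of a density operator (entropy of its eigenvalues). -/
def S0smooth {n : Type*} [Fintype n] [DecidableEq n] (ρ : Matrix n n ℂ) (ε : ℝ) : ℝ :=
  H0smooth (eigs ρ) ε

/-- ε-smooth Rényi entropy of order 2 of a density operator (entropy of its eigenvalues). -/
def S2smooth {n : Type*} [Fintype n] [DecidableEq n] (ρ : Matrix n n ℂ) (ε : ℝ) : ℝ :=
  H2smooth (eigs ρ) ε

/-- Standard basis vector `|y⟩`. -/
def stdb {Y : Type*} [DecidableEq Y] (y : Y) : Y → ℂ := fun y' => if y' = y then 1 else 0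

/-- `n`-fold tensor (Kronecker) product of matrices, one per site. -/
def tpow {n : ℕ} {a b : Type*} (M : Fin n → Matrix a b ℂ) :
    Matrix (Fin n → a) (Fin n → b) ℂ :=
  Matrix.of fun p q => ∏ i, M i (p i) (q i)

/-- `n`-fold tensor product of vectors, one per site. -/
def vpow {n : ℕ} {a : Type*} (v : Fin n → a → ℂ) : (Fin n → a) → ℂ :=
  fun p => ∏ i, v i (p i)

/-- The unitary `U_π` permuting the `n` tensor factors. -/
def permMat {n : ℕ} {a : Type*} [DecidableEq a] (π : Equiv.Perm (Fin n)) :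
    Matrix (Fin n → a) (Fin n → a) ℂ :=
  Matrix.of fun p q => if q = p ∘ π then 1 else 0

/-- Shannon entropy (base 2) of a distribution. -/
def shEnt {X : Type*} [Fintype X] (P : X → ℝ) : ℝ :=
  ∑ x, -(P x * Real.logb 2 (P x))

/-- The binary entropy function. -/
def binEnt (ε : ℝ) : ℝ := -(ε * Real.logb 2 ε) - (1 - ε) * Real.logb 2 (1 - ε)

/-- The quantity `M(X;Y;E)` of a ccq-state: the supremum over all families of density
operators `σ_U^x`, `σ_V^x` of `S(U|VE) - S(U|VY)`. -/
def Mmeas {X Y E : Type*} [Fintype X] [Fintype Y] [Fintype E] [DecidableEq Y] [DecidableEq E]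
    (P : X → Y → ℝ) (σE : X → Y → Matrix E E ℂ) : ℝ :=
  sSup { r : ℝ | ∃ (dU dV : ℕ) (σU : X → Matrix (Fin dU) (Fin dU) ℂ)
      (σV : X → Matrix (Fin dV) (Fin dV) ℂ),
      (∀ x, IsDensity (σU x)) ∧ (∀ x, IsDensity (σV x)) ∧
      r = (vnEntropy (∑ x, ∑ y, P x y • (σU x ⊗ₖ (σV x ⊗ₖ σE x y)))
            - vnEntropy (∑ x, ∑ y, P x y • (σV x ⊗ₖ σE x y)))
        - (vnEntropy (∑ x, ∑ y, P x y • (σU x ⊗ₖ (σV x ⊗ₖ outerPr (stdb y))))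
            - vnEntropy (∑ x, ∑ y, P x y • (σV x ⊗ₖ outerPr (stdb y)))) }

/-!
Write a purification as a coefficient matrix `A`, so that `ρ = A Aᴴ`. By polar decomposition
`A = √ρ V` with `V` a coisometry, and `√ρ' V` is then a purification of `ρ'`. Its distance to `A`
in Hilbert space is the Hilbert–Schmidt norm of `√ρ - √ρ'`, which the Powers–Størmer inequality
bounds by the square root of the trace norm of `ρ - ρ'`. The trace distance of pure states is in
turn at most the Hilbert space distance of the vectors.
-/

open Module WithLp
open scoped InnerProductSpace

section Isometry

variable {𝕜 E F G : Type*} [RCLike 𝕜] [AddCommGroup E] [Module 𝕜 E]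
  [NormedAddCommGroup F] [InnerProductSpace 𝕜 F] [NormedAddCommGroup G] [InnerProductSpace 𝕜 G]

lemma exists_linearIsometry_range_of_norm_eq (f : E →ₗ[𝕜] F) (g : E →ₗ[𝕜] G)
    (h : ∀ x, ‖f x‖ = ‖g x‖) :
    ∃ L : LinearMap.range f →ₗᵢ[𝕜] G, ∀ x, L (f.rangeRestrict x) = g x := by
  have hker : LinearMap.ker f ≤ LinearMap.ker g := fun x hx => by
    rw [LinearMap.mem_ker] at hx ⊢
    rw [← norm_eq_zero, ← h, hx, norm_zero]
  let L : LinearMap.range f →ₗ[𝕜] G :=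
    (LinearMap.ker f).liftQ g hker ∘ₗ f.quotKerEquivRange.symm.toLinearMap
  have hL (x : E) : L (f.rangeRestrict x) = g x := by
    change (LinearMap.ker f).liftQ g hker (f.quotKerEquivRange.symm ⟨f x, _⟩) = g x
    rw [f.quotKerEquivRange_symm_apply_image x (f.mem_range_self x), Submodule.mkQ_apply,
      Submodule.liftQ_apply]
  refine ⟨⟨L, ?_⟩, hL⟩
  rintro ⟨_, x, rfl⟩
  exact (congrArg norm (hL x)).trans (h x).symm

variable [FiniteDimensional 𝕜 F] [FiniteDimensional 𝕜 G]

lemma nonempty_linearIsometry_of_finrank_le (h : finrank 𝕜 F ≤ finrank 𝕜 G) :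
    Nonempty (F →ₗᵢ[𝕜] G) := by
  let b := stdOrthonormalBasis 𝕜 F
  let c := stdOrthonormalBasis 𝕜 G
  refine ⟨(b.toBasis.constr 𝕜 (c ∘ Fin.castLE h)).isometryOfOrthonormal
    (v := b.toBasis) (by simp [b.orthonormal]) ?_⟩
  have hcomp : ⇑(b.toBasis.constr 𝕜 (c ∘ Fin.castLE h)) ∘ ⇑b.toBasis = c ∘ Fin.castLE h :=
    funext fun i => b.toBasis.constr_basis 𝕜 _ i
  rw [hcomp]
  exact c.orthonormal.comp _ (Fin.castLE_injective h)

lemma exists_linearIsometry_comp_eq_of_norm_eq (hFG : finrank 𝕜 F ≤ finrank 𝕜 G)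
    (f : E →ₗ[𝕜] F) (g : E →ₗ[𝕜] G) (h : ∀ x, ‖f x‖ = ‖g x‖) :
    ∃ L : F →ₗᵢ[𝕜] G, L.toLinearMap ∘ₗ f = g := by
  obtain ⟨J⟩ := nonempty_linearIsometry_of_finrank_le hFG
  obtain ⟨L, hL⟩ := exists_linearIsometry_range_of_norm_eq (J.toLinearMap ∘ₗ f) g fun x =>
    (J.norm_map (f x)).trans (h x)
  refine ⟨L.extend.comp J, LinearMap.ext fun x => ?_⟩
  exact (L.extend_apply ((J.toLinearMap ∘ₗ f).rangeRestrict x)).trans (hL x)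

end Isometry

section PolarDecomposition

variable {𝕜 k m n : Type*} [RCLike 𝕜] [Fintype m] [Fintype n] [DecidableEq m]

lemma norm_toEuclideanLin_sq (A : Matrix n m 𝕜) (x : EuclideanSpace 𝕜 m) :
    ‖toEuclideanLin A x‖ ^ 2 = RCLike.re ⟪x, toEuclideanLin (Aᴴ * A) x⟫_𝕜 := by
  classical
  rw [toLpLin_mul_same, LinearMap.comp_apply, toEuclideanLin_conjTranspose_eq_adjoint,
    LinearMap.adjoint_inner_right, inner_self_eq_norm_sq]

lemma conjTranspose_mul_self_of_linearIsometry (L : EuclideanSpace 𝕜 m →ₗᵢ[𝕜] EuclideanSpace 𝕜 n) :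
    (toEuclideanLin.symm L.toLinearMap)ᴴ * toEuclideanLin.symm L.toLinearMap = 1 := by
  classical
  apply toEuclideanLin.injective
  refine LinearMap.ext fun x => ext_inner_left 𝕜 fun y => ?_
  rw [toLpLin_mul_same, LinearMap.comp_apply, toEuclideanLin_conjTranspose_eq_adjoint,
    LinearMap.adjoint_inner_right, LinearEquiv.apply_symm_apply, toLpLin_one]
  exact L.inner_map_map y x

lemma exists_coisometry_eq_mul [Finite k] (hmn : Fintype.card m ≤ Fintype.card n)
    {A : Matrix k n 𝕜} {R : Matrix k m 𝕜} (h : A * Aᴴ = R * Rᴴ) :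
    ∃ V : Matrix m n 𝕜, V * Vᴴ = 1 ∧ A = R * V := by
  classical
  cases nonempty_fintype k
  have hnorm (x : EuclideanSpace 𝕜 k) : ‖toEuclideanLin Rᴴ x‖ = ‖toEuclideanLin Aᴴ x‖ := by
    rw [← sq_eq_sq₀ (norm_nonneg _) (norm_nonneg _), norm_toEuclideanLin_sq,
      norm_toEuclideanLin_sq, conjTranspose_conjTranspose, conjTranspose_conjTranspose, h]
  obtain ⟨L, hL⟩ := exists_linearIsometry_comp_eq_of_norm_eq (by simpa using hmn) _ _ hnorm
  set W := toEuclideanLin.symm L.toLinearMap with hW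
  have hWR : W * Rᴴ = Aᴴ := by
    apply toEuclideanLin.injective
    rw [toLpLin_mul_same, hW, LinearEquiv.apply_symm_apply, hL]
  refine ⟨Wᴴ, ?_, ?_⟩
  · rw [conjTranspose_conjTranspose, conjTranspose_mul_self_of_linearIsometry]
  · rw [← conjTranspose_conjTranspose A, ← hWR, conjTranspose_mul, conjTranspose_conjTranspose]

end PolarDecomposition

section TraceNorm

variable {n : Type*} [Fintype n] [DecidableEq n] {M : Matrix n n ℂ}

/-- The trace norm `tr |M|` of a Hermitian matrix, encoded as the sum of the absolute values of its
eigenvalues; it is `0` if `M` is not Hermitian. -/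
def traceNorm (M : Matrix n n ℂ) : ℝ := ∑ i, |eigs M i|

lemma traceNorm_sub (ρ σ : Matrix n n ℂ) : traceNorm (ρ - σ) = 2 * traceDist ρ σ := by
  rw [traceNorm, traceDist]
  ring

lemma toEuclideanLin_eigenvectorBasis (hM : M.IsHermitian) (i : n) :
    toEuclideanLin M (hM.eigenvectorBasis i) = (eigs M i : ℂ) • hM.eigenvectorBasis i := by
  rw [toLpLin_apply, hM.mulVec_eigenvectorBasis, eigs, dif_pos hM]
  rfl

lemma inner_toEuclideanLin_self_eq_sum (hM : M.IsHermitian) (x : EuclideanSpace ℂ n) :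
    ⟪x, toEuclideanLin M x⟫_ℂ = ∑ j, (eigs M j * ‖⟪x, hM.eigenvectorBasis j⟫_ℂ‖ ^ 2 : ℝ) := by
  rw [← hM.eigenvectorBasis.sum_inner_mul_inner]
  push_cast
  refine Finset.sum_congr rfl fun j _ => ?_
  rw [← isSymmetric_toEuclideanLin_iff.2 hM, toEuclideanLin_eigenvectorBasis, inner_smul_left,
    Complex.conj_ofReal, mul_left_comm, ← inner_conj_symm (hM.eigenvectorBasis j) x,
    Complex.mul_conj']

lemma traceNorm_eq_sum_norm_inner (hM : M.IsHermitian) :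
    traceNorm M =
      ∑ i, ‖⟪hM.eigenvectorBasis i, toEuclideanLin M (hM.eigenvectorBasis i)⟫_ℂ‖ := by
  simp [traceNorm, toEuclideanLin_eigenvectorBasis]

lemma sum_norm_inner_le_traceNorm {ι : Type*} [Fintype ι] (hM : M.IsHermitian)
    (b : OrthonormalBasis ι ℂ (EuclideanSpace ℂ n)) :
    ∑ i, ‖⟪b i, toEuclideanLin M (b i)⟫_ℂ‖ ≤ traceNorm M := by
  let e := hM.eigenvectorBasis
  calc ∑ i, ‖⟪b i, toEuclideanLin M (b i)⟫_ℂ‖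
      ≤ ∑ i, ∑ j, |eigs M j| * ‖⟪b i, e j⟫_ℂ‖ ^ 2 := by
        refine Finset.sum_le_sum fun i _ => ?_
        rw [inner_toEuclideanLin_self_eq_sum hM, Complex.norm_real]
        refine (norm_sum_le _ _).trans_eq (Finset.sum_congr rfl fun j _ => ?_)
        rw [norm_mul, Real.norm_eq_abs, norm_pow, norm_norm]
    _ = ∑ j, |eigs M j| * ∑ i, ‖⟪b i, e j⟫_ℂ‖ ^ 2 := by
        simp only [Finset.mul_sum]
        exact Finset.sum_comm
    _ = traceNorm M := by
        simp only [b.sum_sq_norm_inner_right, e.norm_eq_one, one_pow, mul_one, traceNorm]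

lemma trace_mul_self_eq_sum_eigs_sq (hM : M.IsHermitian) :
    (M * M).trace = ((∑ i, eigs M i ^ 2 : ℝ) : ℂ) := by
  have htrace : (M * M).trace = LinearMap.trace ℂ _ (toEuclideanLin (M * M)) := by
    rw [toEuclideanLin, toLpLin_eq_toLin, Matrix.trace_toLin_eq]
  rw [htrace, LinearMap.trace_eq_sum_inner _ hM.eigenvectorBasis]
  push_cast
  refine Finset.sum_congr rfl fun i _ => ?_
  rw [toLpLin_mul_same, LinearMap.comp_apply, toEuclideanLin_eigenvectorBasis, map_smul,
    toEuclideanLin_eigenvectorBasis, smul_smul, inner_smul_right, inner_self_eq_norm_sq_to_K,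
    hM.eigenvectorBasis.norm_eq_one]
  simp [sq]

end TraceNorm

section PowersStormer

variable {𝕜 E : Type*} [RCLike 𝕜] [NormedAddCommGroup E] [InnerProductSpace 𝕜 E]
  {A B : E →ₗ[𝕜] E} {x : E} {s : ℝ}

lemma inner_mul_self_sub_mul_self (hA : A.IsSymmetric) (hB : B.IsSymmetric)
    (hx : (A - B) x = (s : 𝕜) • x) :
    ⟪x, (A * A - B * B) x⟫_𝕜 = s * (⟪x, A x⟫_𝕜 + ⟪x, B x⟫_𝕜) := by
  have hsplit : A * A - B * B = A * (A - B) + (A - B) * B := by noncomm_ring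
  rw [hsplit, LinearMap.add_apply, Module.End.mul_apply, Module.End.mul_apply, hx, map_smul,
    inner_add_right, inner_smul_right, ← hA.sub hB, hx, inner_smul_left, RCLike.conj_ofReal,
    mul_add]

lemma sq_mul_norm_sq_le_norm_inner (hA : A.IsPositive) (hB : B.IsPositive)
    (hx : (A - B) x = (s : 𝕜) • x) :
    s ^ 2 * ‖x‖ ^ 2 ≤ ‖⟪x, (A * A - B * B) x⟫_𝕜‖ := by
  obtain ⟨a, ha, hxa⟩ := RCLike.nonneg_iff_exists_ofReal.1 (hA.inner_nonneg_right x)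
  obtain ⟨b, hb, hxb⟩ := RCLike.nonneg_iff_exists_ofReal.1 (hB.inner_nonneg_right x)
  have hab : a - b = s * ‖x‖ ^ 2 := by
    have h := congrArg (inner 𝕜 x) hx
    rw [LinearMap.sub_apply, inner_sub_right, ← hxa, ← hxb, inner_smul_right,
      inner_self_eq_norm_sq_to_K] at h
    exact_mod_cast h
  calc s ^ 2 * ‖x‖ ^ 2 = |s| * |a - b| := by
        rw [hab, abs_mul, abs_of_nonneg (sq_nonneg ‖x‖), ← mul_assoc, abs_mul_abs_self, sq s]
    _ ≤ |s| * (a + b) := by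
        gcongr
        exact abs_sub_le_iff.2 ⟨by linarith, by linarith⟩
    _ = ‖⟪x, (A * A - B * B) x⟫_𝕜‖ := by
        rw [inner_mul_self_sub_mul_self hA.isSymmetric hB.isSymmetric hx, ← hxa, ← hxb,
          ← RCLike.ofReal_add, norm_mul, RCLike.norm_ofReal, RCLike.norm_ofReal,
          abs_of_nonneg (add_nonneg ha hb)]

/-- The **Powers–Størmer inequality**. -/
lemma re_trace_sub_mul_sub_le_traceNorm {n : Type*} [Fintype n] [DecidableEq n]
    {A B : Matrix n n ℂ} (hA : A.PosSemidef) (hB : B.PosSemidef) :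
    ((A - B) * (A - B)).trace.re ≤ traceNorm (A * A - B * B) := by
  have hS : (A - B).IsHermitian := hA.1.sub hB.1
  have hD : (A * A - B * B).IsHermitian := by
    simp only [IsHermitian, conjTranspose_sub, conjTranspose_mul, hA.1.eq, hB.1.eq]
  let e := hS.eigenvectorBasis
  have heigen (i : n) :
      (toEuclideanLin A - toEuclideanLin B) (e i) = (eigs (A - B) i : ℂ) • e i := by
    rw [← map_sub]
    exact toEuclideanLin_eigenvectorBasis hS i
  calc ((A - B) * (A - B)).trace.re = ∑ i, eigs (A - B) i ^ 2 := by
        rw [trace_mul_self_eq_sum_eigs_sq hS, Complex.ofReal_re]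
    _ ≤ ∑ i, ‖⟪e i, toEuclideanLin (A * A - B * B) (e i)⟫_ℂ‖ := by
        refine Finset.sum_le_sum fun i _ => ?_
        have h := sq_mul_norm_sq_le_norm_inner (isPositive_toEuclideanLin_iff.2 hA)
          (isPositive_toEuclideanLin_iff.2 hB) (heigen i)
        rw [e.norm_eq_one, one_pow, mul_one] at h
        rwa [map_sub, toLpLin_mul_same, toLpLin_mul_same]
    _ ≤ traceNorm (A * A - B * B) := sum_norm_inner_le_traceNorm hD e

end PowersStormer

section PureStates

variable {n : Type*}

lemma isHermitian_outerPr (v : n → ℂ) : (outerPr v).IsHermitian := by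
  ext i j
  simp [outerPr, mul_comm]

variable [Fintype n] [DecidableEq n]

lemma inner_toEuclideanLin_outerPr_self (v : n → ℂ) (x : EuclideanSpace ℂ n) :
    ⟪x, toEuclideanLin (outerPr v) x⟫_ℂ = ((‖⟪x, toLp 2 v⟫_ℂ‖ ^ 2 : ℝ) : ℂ) := by
  have happly : toEuclideanLin (outerPr v) x = ⟪toLp 2 v, x⟫_ℂ • toLp 2 v := by
    ext i
    simp only [outerPr, toLpLin_apply, mulVec, dotProduct, of_apply, PiLp.inner_apply,
      PiLp.smul_apply, smul_eq_mul, Finset.sum_mul, RCLike.inner_apply, RCLike.star_def]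
    exact Finset.sum_congr rfl fun j _ => by ring
  rw [happly, inner_smul_right, ← inner_conj_symm, Complex.conj_mul', Complex.ofReal_pow]

lemma abs_norm_sq_sub_norm_sq_le {E : Type*} [NormedAddCommGroup E] [InnerProductSpace ℝ E]
    (x y : E) : |‖x‖ ^ 2 - ‖y‖ ^ 2| ≤ ‖x - y‖ * ‖x + y‖ := by
  have h : ⟪x - y, x + y⟫_ℝ = ‖x‖ ^ 2 - ‖y‖ ^ 2 := by
    rw [inner_sub_left, inner_add_right, inner_add_right, real_inner_comm x y,
      real_inner_self_eq_norm_sq, real_inner_self_eq_norm_sq]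
    ring
  exact h ▸ abs_real_inner_le_norm _ _

lemma traceNorm_outerPr_sub_outerPr_le (v w : n → ℂ) :
    traceNorm (outerPr v - outerPr w) ≤ ‖toLp 2 (v - w)‖ * ‖toLp 2 (v + w)‖ := by
  have hM := (isHermitian_outerPr v).sub (isHermitian_outerPr w)
  let e := hM.eigenvectorBasis
  have hterm (i : n) : ‖⟪e i, toEuclideanLin (outerPr v - outerPr w) (e i)⟫_ℂ‖ ≤
      ‖⟪e i, toLp 2 (v - w)⟫_ℂ‖ * ‖⟪e i, toLp 2 (v + w)⟫_ℂ‖ := by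
    rw [map_sub, LinearMap.sub_apply, inner_sub_right, inner_toEuclideanLin_outerPr_self,
      inner_toEuclideanLin_outerPr_self, ← Complex.ofReal_sub, Complex.norm_real,
      toLp_sub, toLp_add, inner_sub_right, inner_add_right]
    exact abs_norm_sq_sub_norm_sq_le _ _
  calc traceNorm (outerPr v - outerPr w)
      = ∑ i, ‖⟪e i, toEuclideanLin (outerPr v - outerPr w) (e i)⟫_ℂ‖ :=
        traceNorm_eq_sum_norm_inner hM
    _ ≤ ∑ i, ‖⟪e i, toLp 2 (v - w)⟫_ℂ‖ * ‖⟪e i, toLp 2 (v + w)⟫_ℂ‖ :=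
        Finset.sum_le_sum fun i _ => hterm i
    _ ≤ √(∑ i, ‖⟪e i, toLp 2 (v - w)⟫_ℂ‖ ^ 2) * √(∑ i, ‖⟪e i, toLp 2 (v + w)⟫_ℂ‖ ^ 2) :=
        Real.sum_mul_le_sqrt_mul_sqrt _ _ _
    _ = ‖toLp 2 (v - w)‖ * ‖toLp 2 (v + w)‖ := by
        rw [e.sum_sq_norm_inner_right, e.sum_sq_norm_inner_right, Real.sqrt_sq (norm_nonneg _),
          Real.sqrt_sq (norm_nonneg _)]

lemma traceDist_outerPr_le_norm_sub {v w : n → ℂ} (hv : ‖toLp 2 v‖ ≤ 1) (hw : ‖toLp 2 w‖ ≤ 1) :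
    traceDist (outerPr v) (outerPr w) ≤ ‖toLp 2 (v - w)‖ := by
  have hadd : ‖toLp 2 (v + w)‖ ≤ 2 := by
    rw [toLp_add]
    linarith [norm_add_le (toLp 2 v) (toLp 2 w)]
  have h := (traceNorm_outerPr_sub_outerPr_le v w).trans
    (mul_le_mul_of_nonneg_left hadd (norm_nonneg _))
  rw [traceNorm_sub] at h
  linarith

end PureStates

section Purification

variable {m w : Type*}

/-- The coefficient matrix of a vector of a tensor product in the product basis. It turns the
partial trace of `|ψ⟩⟨ψ|` into `A * Aᴴ` and operators on the second factor into right factors. -/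
def coeffMatrix (ψ : m × w → ℂ) : Matrix m w ℂ := Matrix.of (Function.curry ψ)

lemma ptraceR_outerPr [Fintype w] (ψ : m × w → ℂ) :
    ptraceR (outerPr ψ) = coeffMatrix ψ * (coeffMatrix ψ)ᴴ := rfl

variable [Fintype m] [Fintype w]

lemma trace_ptraceR (M : Matrix (m × w) (m × w) ℂ) : (ptraceR M).trace = M.trace := by
  simp [ptraceR, trace, Fintype.sum_prod_type]

lemma norm_toLp_sq_eq_re_trace (ψ : m × w → ℂ) :
    ‖toLp 2 ψ‖ ^ 2 = (coeffMatrix ψ * (coeffMatrix ψ)ᴴ).trace.re := by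
  rw [← ptraceR_outerPr, trace_ptraceR, EuclideanSpace.norm_sq_eq]
  simp only [trace, outerPr, diag_apply, of_apply, RCLike.star_def, Complex.mul_conj,
    Complex.re_sum, Complex.ofReal_re, Complex.normSq_eq_norm_sq]

lemma isPurification_iff {ψ : m × w → ℂ} {ρ : Matrix m m ℂ} :
    IsPurification ψ ρ ↔ ‖toLp 2 ψ‖ = 1 ∧ coeffMatrix ψ * (coeffMatrix ψ)ᴴ = ρ := by
  rw [← sq_eq_sq₀ (norm_nonneg _) zero_le_one, one_pow, EuclideanSpace.norm_sq_eq,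
    ← ptraceR_outerPr]
  simp only [IsPurification, Complex.normSq_eq_norm_sq]

lemma exists_isPurification_norm_sub_sq_eq {k : Type*} [Fintype k]
    (hkw : Fintype.card k ≤ Fintype.card w) {R R' : Matrix m k ℂ}
    {ψ : m × w → ℂ} (hψ : IsPurification ψ (R * Rᴴ)) (hR' : (R' * R'ᴴ).trace = 1) :
    ∃ ψ' : m × w → ℂ, IsPurification ψ' (R' * R'ᴴ) ∧
      ‖toLp 2 (ψ - ψ')‖ ^ 2 = ((R - R') * (R - R')ᴴ).trace.re := by
  classical
  obtain ⟨V, hV, hψV⟩ := exists_coisometry_eq_mul hkw (isPurification_iff.1 hψ).2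
  have hcancel (S : Matrix m k ℂ) : (S * V) * (S * V)ᴴ = S * Sᴴ := by
    rw [conjTranspose_mul, Matrix.mul_assoc, ← Matrix.mul_assoc V, hV, Matrix.one_mul]
  let ψ' : m × w → ℂ := Function.uncurry (R' * V)
  have hψ' : coeffMatrix ψ' = R' * V := rfl
  have hsub : coeffMatrix (ψ - ψ') = (R - R') * V := by
    rw [Matrix.sub_mul, ← hψV, ← hψ']
    rfl
  refine ⟨ψ', isPurification_iff.2 ⟨?_, ?_⟩, ?_⟩
  · rw [← sq_eq_sq₀ (norm_nonneg _) zero_le_one, norm_toLp_sq_eq_re_trace, hψ', hcancel, hR',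
      Complex.one_re, one_pow]
  · rw [hψ', hcancel]
  · rw [norm_toLp_sq_eq_re_trace, hsub, hcancel]

lemma IsPurification.posSemidef {ψ : m × w → ℂ} {ρ : Matrix m m ℂ} (hψ : IsPurification ψ ρ) :
    ρ.PosSemidef :=
  (isPurification_iff.1 hψ).2 ▸ posSemidef_self_mul_conjTranspose _

end Purification

open scoped MatrixOrder in
lemma exists_posSemidef_mul_self_eq {𝕜 n : Type*} [RCLike 𝕜] [Fintype n]
    {M : Matrix n n 𝕜} (hM : M.PosSemidef) : ∃ R : Matrix n n 𝕜, R.PosSemidef ∧ R * R = M := by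
  classical
  exact ⟨CFC.sqrt M, (CFC.sqrt_nonneg M).posSemidef, CFC.sqrt_mul_sqrt_self M hM.nonneg⟩

theorem purification_close_of_close_general {m w : Type*} [Fintype m] [DecidableEq m] [Fintype w]
    [DecidableEq w] (hmw : Fintype.card m ≤ Fintype.card w) {ρ ρ' : Matrix m m ℂ}
    (hρ' : IsDensity ρ') {ψ : m × w → ℂ} (hψ : IsPurification ψ ρ) :
    ∃ ψ' : m × w → ℂ, IsPurification ψ' ρ' ∧
      traceDist (outerPr ψ) (outerPr ψ') ≤ √(2 * traceDist ρ ρ') := by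
  obtain ⟨R, hR, rfl⟩ := exists_posSemidef_mul_self_eq hψ.posSemidef
  obtain ⟨R', hR', rfl⟩ := exists_posSemidef_mul_self_eq hρ'.1
  obtain ⟨ψ', hψ', hdist⟩ := exists_isPurification_norm_sub_sq_eq (R := R) (R' := R') hmw
    (by rwa [hR.1.eq]) (by rw [hR'.1.eq, hρ'.2])
  rw [hR'.1.eq] at hψ'
  rw [(hR.1.sub hR'.1).eq] at hdist
  refine ⟨ψ', hψ', ?_⟩
  calc traceDist (outerPr ψ) (outerPr ψ') ≤ ‖toLp 2 (ψ - ψ')‖ :=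
        traceDist_outerPr_le_norm_sub (isPurification_iff.1 hψ).1.le (isPurification_iff.1 hψ').1.le
    _ ≤ √(2 * traceDist (R * R) (R' * R')) := by
        refine Real.le_sqrt_of_sq_le ?_
        rw [hdist, ← traceNorm_sub]
        exact re_trace_sub_mul_sub_le_traceNorm hR hR'

/-- For density operators `ρ, ρ'` on `ℂ^d` and a purification `ψ` of `ρ`
in `ℂ^d ⊗ ℂ^{d'}` with `d' ≥ d`, there is a purification `ψ'` of `ρ'` in the same space with
`δ(|ψ⟩⟨ψ|, |ψ'⟩⟨ψ'|) ≤ √(2 δ(ρ, ρ'))`. -/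
theorem purification_close_of_close
    {d d' : ℕ} (hd : d ≤ d')
    (ρ ρ' : Matrix (Fin d) (Fin d) ℂ)
    (hρ : IsDensity ρ) (hρ' : IsDensity ρ')
    (ψ : Fin d × Fin d' → ℂ) (hψ : IsPurification ψ ρ) :
    ∃ ψ' : Fin d × Fin d' → ℂ, IsPurification ψ' ρ' ∧
      traceDist (outerPr ψ) (outerPr ψ') ≤ Real.sqrt (2 * traceDist ρ ρ') :=
  purification_close_of_close_general (by simpa using hd) hρ' hψ
end
end

section
/- Let ρ_{XB} = Σ_{x=1}^d μ_x |x⟩⟨x| ⊗ ρ_B^x be a bipartite density operator, where {|x⟩}_{x=1,…,d} is an orthonormal basis of ℂ^d, (μ_x) is a probability distribution, and each ρ_B^x is a density operator on ℂ^{d_B}. If δ(ρ_{XB}, ρ_X ⊗ ρ_B) ≤ ε, where ρ_X and ρ_B are the reduced states (partial traces) of ρ_{XB}, then S(X|B) ≥ S(X) − √(2ε)·log₂ d − 1/e. -/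
open scoped Matrix Kronecker BigOperators ComplexOrder
open Matrix

noncomputable section

/-!
Write `A x = μ x • ρB x` for the blocks of the cq state, and let `ν x • τ` be the blocks of a
product state at trace distance `η`. Adding to `A` the negative part `N` of `A - ν • τ`, which has
total trace `η`, gives a family `A + N` dominating `ν • τ`. Operator monotonicity and concavity of
the logarithm show that `S(X|B)` of `A + N` is at least `H(ν)`. On the other hand it exceeds
`S(X|B)` of `A` by at most `S(X|B)` of `N`, which is at most `η log d`, plus the mixing term
`-η log η + (1 + η) log (1 + η)`. Hence the defect `χ = H(ν) - S(X|B)` satisfies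
`χ ≤ η log d - η log η + (1 + η) log (1 + η)`, and also `χ ≤ log d`. For `s = √(2η) < 1`, the right
convex combination of the two bounds has `s log d` as its term in `log d`, and the rest stays below
`(log 2) / e`, which is `1 / e` in bits.
-/

open scoped MatrixOrder Topology
open Filter

lemma log_sum_inequality {ι : Type*} (s : Finset ι) {p q : ι → ℝ} (hp : ∀ i ∈ s, 0 ≤ p i)
    (hq : ∀ i ∈ s, 0 ≤ q i) (hpq : ∀ i ∈ s, q i = 0 → p i = 0) :
    (∑ i ∈ s, p i) * (Real.log (∑ i ∈ s, p i) - Real.log (∑ i ∈ s, q i)) ≤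
      ∑ i ∈ s, p i * (Real.log (p i) - Real.log (q i)) := by
  set P := ∑ i ∈ s, p i with hP
  set Q := ∑ i ∈ s, q i with hQ
  have hP0 : 0 ≤ P := Finset.sum_nonneg hp
  have hQ0 : 0 ≤ Q := Finset.sum_nonneg hq
  have hterm : ∀ i ∈ s, p i * (Real.log P - Real.log Q) + (p i - P / Q * q i) ≤
      p i * (Real.log (p i) - Real.log (q i)) := by
    intro i hi
    rcases (hp i hi).eq_or_lt with hpi | hpi
    · have : 0 ≤ P / Q * q i := mul_nonneg (by positivity) (hq i hi)
      simpa [← hpi] using this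
    have hqi : 0 < q i := (hq i hi).lt_of_ne fun h => hpi.ne' (hpq i hi h.symm)
    have hPpos : 0 < P := hpi.trans_le (Finset.single_le_sum hp hi)
    have hQpos : 0 < Q := hqi.trans_le (Finset.single_le_sum hq hi)
    have hlog : Real.log (P / Q * q i / p i) ≤ P / Q * q i / p i - 1 :=
      Real.log_le_sub_one_of_pos (by positivity)
    rw [Real.log_div (by positivity) hpi.ne', Real.log_mul (by positivity) hqi.ne',
      Real.log_div hPpos.ne' hQpos.ne', ← sub_nonneg] at hlog
    have := mul_nonneg hpi.le hlog
    have hcancel : p i * (P / Q * q i / p i) = P / Q * q i := mul_div_cancel₀ _ hpi.ne'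
    linarith
  have hsum := Finset.sum_le_sum hterm
  rw [Finset.sum_add_distrib, Finset.sum_sub_distrib, ← Finset.sum_mul, ← Finset.mul_sum, ← hP,
    ← hQ] at hsum
  have hmass : P / Q * Q = P := by
    refine div_mul_cancel_of_imp fun hQz => Finset.sum_eq_zero fun i hi => hpq i hi ?_
    exact (Finset.sum_eq_zero_iff_of_nonneg hq).1 hQz i hi
  linarith

lemma sum_negMulLog_le {ι : Type*} [Fintype ι] {p : ι → ℝ} (hp : ∀ i, 0 ≤ p i) :
    ∑ i, Real.negMulLog (p i) ≤
      (∑ i, p i) * Real.log (Fintype.card ι) + Real.negMulLog (∑ i, p i) := by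
  have h := log_sum_inequality Finset.univ (q := fun _ => 1) (fun i _ => hp i)
    (fun _ _ => zero_le_one) (fun _ _ h => absurd h one_ne_zero)
  simp only [Finset.sum_const, Finset.card_univ, nsmul_eq_mul, mul_one, Real.log_one,
    sub_zero] at h
  simp only [Real.negMulLog_eq_neg, Finset.sum_neg_distrib]
  linarith

lemma one_add_mul_log_one_add_le {x : ℝ} (hx : 0 ≤ x) :
    (1 + x) * Real.log (1 + x) ≤ x + x ^ 2 / 2 := by
  have hpos : 0 < 1 + x := by linarith
  have hlog : Real.log (1 + x) ≤ (1 + x - (1 + x)⁻¹) / 2 :=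
    Real.sinh_log hpos ▸ Real.self_le_sinh_iff.2 (Real.log_nonneg (by linarith))
  calc (1 + x) * Real.log (1 + x) ≤ (1 + x) * ((1 + x - (1 + x)⁻¹) / 2) := by gcongr
    _ = x + x ^ 2 / 2 := by field_simp; ring

lemma negMulLog_le_tangent {x a : ℝ} (hx : 0 ≤ x) (ha : 0 < a) :
    Real.negMulLog x ≤ a - x - x * Real.log a := by
  have h := mul_le_mul_of_nonneg_left (Real.negMulLog_le_one_sub_self (div_nonneg hx ha.le)) ha.le
  have := Real.negMulLog_mul a (x / a)
  rw [mul_div_cancel₀ _ ha.ne'] at this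
  have h2 : x / a * Real.negMulLog a = -(x * Real.log a) := by
    rw [Real.negMulLog]; field_simp
  have h3 : a * (1 - x / a) = a - x := by field_simp
  linarith

lemma one_sub_mul_le_mul_log_two_div_exp_one {s : ℝ} (hs0 : 0 ≤ s) (hs1 : s ≤ 1) :
    (1 - s) * (s ^ 2 * Real.log 2 + 1 / 4 + s ^ 4 / 8) ≤
      (1 - s ^ 2 / 2) * (Real.log 2 / Real.exp 1) := by
  have he : (0.2549 : ℝ) ≤ Real.log 2 / Real.exp 1 := by
    rw [le_div_iff₀ (Real.exp_pos 1)]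
    nlinarith [Real.exp_one_lt_d9, Real.log_two_gt_d9]
  have : 0 ≤ 1 - s := by linarith
  calc (1 - s) * (s ^ 2 * Real.log 2 + 1 / 4 + s ^ 4 / 8)
      ≤ (1 - s) * (s ^ 2 * 0.6932 + 1 / 4 + s ^ 4 / 8) := by
        gcongr
        linarith [Real.log_two_lt_d9]
    _ ≤ (1 - s ^ 2 / 2) * 0.2549 := by
        -- The gap is smallest, about `0.0026`, near `s = 0.615`, so expand around that point.
        have : 0 ≤ (s - 0.615) ^ 2 *
            (s ^ 3 / 8 + 0.02875 * s ^ 2 + 0.681284375 * s + 0.0064558125) := by positivity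
        linarith
    _ ≤ (1 - s ^ 2 / 2) * (Real.log 2 / Real.exp 1) := by
        have : 0 ≤ 1 - s ^ 2 / 2 := by nlinarith
        gcongr

lemma le_sqrt_two_mul_mul_add {χ L δ : ℝ} (hδ : 0 ≤ δ) (hL : 0 ≤ L) (hχL : χ ≤ L)
    (hχδ : χ ≤ δ * L + Real.negMulLog δ + (1 + δ) * Real.log (1 + δ)) :
    χ ≤ √(2 * δ) * L + Real.log 2 / Real.exp 1 := by
  have he : 0 ≤ Real.log 2 / Real.exp 1 := by positivity
  set s := √(2 * δ) with hs
  have hs0 : 0 ≤ s := Real.sqrt_nonneg _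
  have hδs : δ = s ^ 2 / 2 := by rw [hs, Real.sq_sqrt (by positivity)]; ring
  rcases le_or_gt 1 s with hs1 | hs1
  · nlinarith
  have hχ : χ ≤ δ * L + (s ^ 2 * Real.log 2 + 1 / 4 + s ^ 4 / 8) := by
    have hlog : Real.log (1 / 4) = -(2 * Real.log 2) := by
      rw [one_div, Real.log_inv, show (4 : ℝ) = 2 ^ 2 by norm_num, Real.log_pow]
      norm_num
    have h1 := negMulLog_le_tangent hδ (a := 1 / 4) (by norm_num)
    have h2 := one_add_mul_log_one_add_le hδ
    rw [hlog, hδs] at h1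
    rw [hδs] at h2 hχδ ⊢
    linarith
  have hδ1 : 0 < 1 - δ := by nlinarith
  -- Combine `χ ≤ L` and `hχ` with weights `s - δ` and `1 - s`, chosen to leave `(1 - δ) s L`.
  refine le_of_mul_le_mul_left ?_ hδ1
  calc (1 - δ) * χ = (s - δ) * χ + (1 - s) * χ := by ring
    _ ≤ (s - δ) * L + (1 - s) * (δ * L + (s ^ 2 * Real.log 2 + 1 / 4 + s ^ 4 / 8)) := by
        have : 0 ≤ s - δ := by nlinarith
        have : 0 ≤ 1 - s := by linarith
        gcongr
    _ = (1 - δ) * (s * L) + (1 - s) * (s ^ 2 * Real.log 2 + 1 / 4 + s ^ 4 / 8) := by ring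
    _ ≤ (1 - δ) * (s * L) + (1 - δ) * (Real.log 2 / Real.exp 1) := by
        rw [hδs]
        linarith [one_sub_mul_le_mul_log_two_div_exp_one hs0 hs1.le]
    _ = (1 - δ) * (s * L + Real.log 2 / Real.exp 1) := by ring

section PositiveSemidefinite

variable {n : Type*} [Fintype n] {A B P : Matrix n n ℂ}

lemma re_trace_nonneg (hA : 0 ≤ A) : 0 ≤ A.trace.re :=
  (Complex.le_def.1 (nonneg_iff_posSemidef.1 hA).trace_nonneg).1

lemma re_trace_mul_nonneg (hA : 0 ≤ A) (hB : 0 ≤ B) : 0 ≤ (A * B).trace.re := by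
  classical
  obtain ⟨S, rfl⟩ := CStarAlgebra.nonneg_iff_eq_star_mul_self.1 hA
  rw [mul_assoc, trace_mul_comm]
  exact (Complex.le_def.1
    ((nonneg_iff_posSemidef.1 hB).mul_mul_conjTranspose_same S).trace_nonneg).1

lemma re_trace_mul_le_re_trace_mul (hP : 0 ≤ P) (h : A ≤ B) :
    (P * A).trace.re ≤ (P * B).trace.re := by
  have := re_trace_mul_nonneg hP (sub_nonneg.2 h)
  rwa [mul_sub, trace_sub, Complex.sub_re, sub_nonneg] at this

/-- Support containment `supp P ⊆ supp B` (equivalently `ker B ⊆ ker P`), the condition under which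
`-tr (P log B)` is finite; without it the convention `Real.log 0 = 0` would drop an infinite
contribution. -/
def SupportedOn (P B : Matrix n n ℂ) : Prop :=
  ∀ v, B *ᵥ v = 0 → P *ᵥ v = 0

lemma supportedOn_of_le (hP : 0 ≤ P) (hPB : P ≤ B) : SupportedOn P B := by
  intro v hv
  have hP' := nonneg_iff_posSemidef.1 hP
  rw [← hP'.dotProduct_mulVec_zero_iff]
  refine le_antisymm ?_ (hP'.dotProduct_mulVec_nonneg v)
  have := (le_iff.1 hPB).dotProduct_mulVec_nonneg v
  rwa [sub_mulVec, dotProduct_sub, hv, dotProduct_zero, zero_sub, Left.nonneg_neg_iff] at this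

lemma SupportedOn.mono (h : SupportedOn P A) (hA : 0 ≤ A) (hAB : A ≤ B) : SupportedOn P B :=
  fun v hv => h v (supportedOn_of_le hA hAB v hv)

lemma SupportedOn.smul_right {c : ℝ} (h : SupportedOn P B) (hc : c ≠ 0) : SupportedOn P (c • B) :=
  fun v hv => h v <| (smul_eq_zero.1 (smul_mulVec c B v ▸ hv)).resolve_left hc

lemma SupportedOn.of_smul_left {c : ℝ} (h : SupportedOn (c • P) B) (hc : c ≠ 0) :
    SupportedOn P B :=
  fun v hv => (smul_eq_zero.1 (smul_mulVec c P v ▸ h v hv)).resolve_left hc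

lemma SupportedOn.sum_smul_right {ι : Type*} {s : Finset ι} {w : ι → ℝ} {B : ι → Matrix n n ℂ}
    (hw0 : ∀ i ∈ s, 0 ≤ w i) (hw : ∑ i ∈ s, w i ≠ 0) (hB : ∀ i ∈ s, 0 ≤ B i)
    (h : ∀ i ∈ s, w i ≠ 0 → SupportedOn P (B i)) : SupportedOn P (∑ i ∈ s, w i • B i) := by
  obtain ⟨i, hi, hwi⟩ := Finset.exists_ne_zero_of_sum_ne_zero hw
  have hwB : ∀ j ∈ s, 0 ≤ w j • B j := fun j hj => smul_nonneg (hw0 j hj) (hB j hj)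
  exact ((h i hi hwi).smul_right hwi).mono (hwB i hi) (Finset.single_le_sum hwB hi)

end PositiveSemidefinite

section Spectral

variable {n : Type*} [Fintype n] [DecidableEq n] {A B P : Matrix n n ℂ}

/-- The squared overlaps `|⟨aᵢ, bⱼ⟩|²` of the eigenbases of two Hermitian matrices: the doubly
stochastic weights that express traces of products of functions of `A` and `B` classically. -/
def overlap (hA : A.IsHermitian) (hB : B.IsHermitian) (i j : n) : ℝ :=
  Complex.normSq (star ⇑(hA.eigenvectorBasis i) ⬝ᵥ ⇑(hB.eigenvectorBasis j))

lemma overlap_nonneg (hA : A.IsHermitian) (hB : B.IsHermitian) (i j : n) :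
    0 ≤ overlap hA hB i j :=
  Complex.normSq_nonneg _

lemma re_trace_cfc_mul_cfc (hA : A.IsHermitian) (hB : B.IsHermitian) (f g : ℝ → ℝ) :
    (cfc f A * cfc g B).trace.re =
      ∑ k : n × n, f (hA.eigenvalues k.1) * g (hB.eigenvalues k.2) * overlap hA hB k.1 k.2 := by
  set U : Matrix n n ℂ := hA.eigenvectorUnitary.1
  set V : Matrix n n ℂ := hB.eigenvectorUnitary.1
  set W := star U * V with hW
  have hcfc : (cfc f A * cfc g B).trace =
      (diagonal (fun i => (f (hA.eigenvalues i) : ℂ)) *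
        (W * diagonal (fun j => (g (hB.eigenvalues j) : ℂ)) * star W)).trace := by
    rw [hA.cfc_eq, hB.cfc_eq, IsHermitian.cfc, IsHermitian.cfc, Unitary.conjStarAlgAut_apply,
      Unitary.conjStarAlgAut_apply, mul_assoc, mul_assoc, trace_mul_comm, hW, star_mul, star_star]
    simp only [mul_assoc]
    rfl
  rw [hcfc, trace, Complex.re_sum, Fintype.sum_prod_type]
  refine Finset.sum_congr rfl fun i _ => ?_
  rw [diag_apply, diagonal_mul, mul_apply, Complex.re_ofReal_mul, Complex.re_sum, Finset.mul_sum]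
  refine Finset.sum_congr rfl fun j _ => ?_
  rw [mul_diagonal, star_apply, RCLike.star_def, mul_right_comm, Complex.mul_conj,
    ← Complex.ofReal_mul, Complex.ofReal_re]
  have : W i j = star ⇑(hA.eigenvectorBasis i) ⬝ᵥ ⇑(hB.eigenvectorBasis j) := rfl
  rw [overlap, this]
  ring

lemma re_trace_mul_cfc (hA : A.IsHermitian) (hB : B.IsHermitian) (g : ℝ → ℝ) :
    (A * cfc g B).trace.re =
      ∑ k : n × n, hA.eigenvalues k.1 * g (hB.eigenvalues k.2) * overlap hA hB k.1 k.2 := by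
  simpa only [cfc_id' ℝ A] using re_trace_cfc_mul_cfc hA hB (fun x => x) g

lemma re_trace_cfc_eq_sum_overlap (hA : A.IsHermitian) (hB : B.IsHermitian) (f : ℝ → ℝ) :
    (cfc f A).trace.re = ∑ k : n × n, f (hA.eigenvalues k.1) * overlap hA hB k.1 k.2 := by
  simpa only [cfc_const_one ℝ B, mul_one] using re_trace_cfc_mul_cfc hA hB f fun _ => 1

lemma re_trace_eq_sum_overlap_left (hA : A.IsHermitian) (hB : B.IsHermitian) :
    A.trace.re = ∑ k : n × n, hA.eigenvalues k.1 * overlap hA hB k.1 k.2 := by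
  simpa only [cfc_id' ℝ A] using re_trace_cfc_eq_sum_overlap hA hB fun x => x

lemma re_trace_eq_sum_overlap_right (hA : A.IsHermitian) (hB : B.IsHermitian) :
    B.trace.re = ∑ k : n × n, hB.eigenvalues k.2 * overlap hA hB k.1 k.2 := by
  simpa only [cfc_const_one ℝ A, cfc_id' ℝ B, one_mul] using
    re_trace_cfc_mul_cfc hA hB (fun _ => 1) fun x => x

lemma trace_cfc (hA : A.IsHermitian) (f : ℝ → ℝ) :
    (cfc f A).trace = ∑ i, (f (hA.eigenvalues i) : ℂ) := by
  rw [hA.cfc_eq, IsHermitian.cfc, Unitary.conjStarAlgAut_apply, trace_mul_cycle]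
  simp [trace]

lemma SupportedOn.eigenvalues_mul_overlap_eq_zero (h : SupportedOn P B) (hP : P.IsHermitian)
    (hB : B.IsHermitian) {i j : n} (hj : hB.eigenvalues j = 0) :
    hP.eigenvalues i * overlap hP hB i j = 0 := by
  have hBv : B *ᵥ ⇑(hB.eigenvectorBasis j) = 0 := by
    rw [hB.mulVec_eigenvectorBasis, hj, zero_smul]
  have hzero : (hP.eigenvalues i : ℂ) *
      (star ⇑(hP.eigenvectorBasis i) ⬝ᵥ ⇑(hB.eigenvectorBasis j)) = 0 := by
    calc (hP.eigenvalues i : ℂ) * (star ⇑(hP.eigenvectorBasis i) ⬝ᵥ ⇑(hB.eigenvectorBasis j))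
        = star (P *ᵥ ⇑(hP.eigenvectorBasis i)) ⬝ᵥ ⇑(hB.eigenvectorBasis j) := by
          rw [hP.mulVec_eigenvectorBasis, star_smul, smul_dotProduct, Complex.real_smul,
            star_trivial (hP.eigenvalues i)]
      _ = star ⇑(hP.eigenvectorBasis i) ⬝ᵥ P *ᵥ ⇑(hB.eigenvectorBasis j) := by
          rw [star_mulVec, hP.eq, dotProduct_mulVec]
      _ = 0 := by rw [h _ hBv, dotProduct_zero]
  rcases mul_eq_zero.1 hzero with h0 | h0
  · rw [Complex.ofReal_eq_zero.1 h0, zero_mul]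
  · rw [overlap, h0, map_zero, mul_zero]

end Spectral

section CrossEntropy

variable {n : Type*} [Fintype n] [DecidableEq n] {A B P : Matrix n n ℂ}

/-- The quantum cross entropy `-tr (P log B)`, in nats. It has its usual meaning when
`SupportedOn P B`. -/
def crossEntropy (P B : Matrix n n ℂ) : ℝ :=
  -(P * cfc Real.log B).trace.re

lemma crossEntropy_add_left (P Q B : Matrix n n ℂ) :
    crossEntropy (P + Q) B = crossEntropy P B + crossEntropy Q B := by
  rw [crossEntropy, add_mul, trace_add, Complex.add_re, neg_add]
  rfl

lemma crossEntropy_sum_left {ι : Type*} (s : Finset ι) (P : ι → Matrix n n ℂ)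
    (B : Matrix n n ℂ) : crossEntropy (∑ i ∈ s, P i) B = ∑ i ∈ s, crossEntropy (P i) B := by
  simp only [crossEntropy, Finset.sum_mul, trace_sum, Complex.re_sum, Finset.sum_neg_distrib]

lemma crossEntropy_smul_left (c : ℝ) (P B : Matrix n n ℂ) :
    crossEntropy (c • P) B = c * crossEntropy P B := by
  rw [crossEntropy, smul_mul, trace_smul, Complex.smul_re, smul_eq_mul, ← mul_neg]
  rfl

lemma crossEntropy_self_eq_re_trace (hA : A.IsHermitian) :
    crossEntropy A A = (cfc Real.negMulLog A).trace.re := by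
  have hA' : IsSelfAdjoint A := hA
  have h : cfc Real.negMulLog A = -(A * cfc Real.log A) := by
    simp only [Real.negMulLog_eq_neg]
    rw [cfc_neg, cfc_mul (fun x => x) Real.log A (by fun_prop)
      (A.finite_real_spectrum.continuousOn _), cfc_id' ℝ A]
  rw [h, trace_neg, Complex.neg_re, crossEntropy]

lemma crossEntropy_self (hA : A.IsHermitian) :
    crossEntropy A A = ∑ i, Real.negMulLog (hA.eigenvalues i) := by
  rw [crossEntropy_self_eq_re_trace hA, trace_cfc hA, Complex.re_sum]
  simp only [Complex.ofReal_re]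

lemma crossEntropy_smul_right (hP : P.IsHermitian) (hB : B.IsHermitian) (hPB : SupportedOn P B)
    {c : ℝ} (hc : c ≠ 0) :
    crossEntropy P (c • B) = crossEntropy P B - Real.log c * P.trace.re := by
  have hB' : IsSelfAdjoint B := hB
  have hcfc : cfc Real.log (c • B) = cfc (fun x => Real.log (c * x)) B := by
    rw [← cfc_comp_smul c Real.log B ((B.finite_real_spectrum.image _).continuousOn _)]
    rfl
  rw [crossEntropy, crossEntropy, hcfc, re_trace_mul_cfc hP hB, re_trace_mul_cfc hP hB,
    re_trace_eq_sum_overlap_left hP hB, Finset.mul_sum, ← Finset.sum_neg_distrib,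
    ← Finset.sum_neg_distrib, ← Finset.sum_sub_distrib]
  refine Finset.sum_congr rfl fun k _ => ?_
  rcases eq_or_ne (hB.eigenvalues k.2) 0 with hk | hk
  · have h := hPB.eigenvalues_mul_overlap_eq_zero hP hB (i := k.1) hk
    linear_combination (Real.log (hB.eigenvalues k.2) + Real.log c -
      Real.log (c * hB.eigenvalues k.2)) * h
  · rw [Real.log_mul hc hk]
    ring

-- The pair distributions `aᵢ|⟨aᵢ, bⱼ⟩|²` and `bⱼ|⟨aᵢ, bⱼ⟩|²` (Nussbaum–Szkoła) turn a quantum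
-- relative entropy into a classical one.
lemma crossEntropy_sub_crossEntropy_self (hA : A.IsHermitian) (hB : B.IsHermitian)
    (hAB : SupportedOn A B) :
    crossEntropy A B - crossEntropy A A =
      ∑ k : n × n, hA.eigenvalues k.1 * overlap hA hB k.1 k.2 *
        (Real.log (hA.eigenvalues k.1 * overlap hA hB k.1 k.2) -
          Real.log (hB.eigenvalues k.2 * overlap hA hB k.1 k.2)) := by
  rw [crossEntropy_self_eq_re_trace hA, re_trace_cfc_eq_sum_overlap hA hB, crossEntropy,
    re_trace_mul_cfc hA hB, ← Finset.sum_neg_distrib, ← Finset.sum_sub_distrib]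
  refine Finset.sum_congr rfl fun k _ => ?_
  rw [Real.negMulLog]
  by_cases hk : hA.eigenvalues k.1 * overlap hA hB k.1 k.2 = 0
  · rw [hk]
    linear_combination
      (Real.log (hA.eigenvalues k.1) - Real.log (hB.eigenvalues k.2)) * hk
  · have hb : hB.eigenvalues k.2 ≠ 0 := mt (hAB.eigenvalues_mul_overlap_eq_zero hA hB) hk
    rw [Real.log_mul (left_ne_zero_of_mul hk) (right_ne_zero_of_mul hk),
      Real.log_mul hb (right_ne_zero_of_mul hk)]
    ring

lemma klein_inequality (hA : 0 ≤ A) (hB : 0 ≤ B) (hAB : SupportedOn A B) :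
    crossEntropy A A + A.trace.re * (Real.log A.trace.re - Real.log B.trace.re) ≤
      crossEntropy A B := by
  have hA' := nonneg_iff_posSemidef.1 hA
  have hB' := nonneg_iff_posSemidef.1 hB
  have hw := overlap_nonneg hA'.1 hB'.1
  have h := log_sum_inequality Finset.univ
    (p := fun k : n × n => hA'.1.eigenvalues k.1 * overlap hA'.1 hB'.1 k.1 k.2)
    (q := fun k : n × n => hB'.1.eigenvalues k.2 * overlap hA'.1 hB'.1 k.1 k.2)
    (fun k _ => mul_nonneg (hA'.eigenvalues_nonneg _) (hw _ _))
    (fun k _ => mul_nonneg (hB'.eigenvalues_nonneg _) (hw _ _)) fun k _ hk => ?_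
  · rw [← crossEntropy_sub_crossEntropy_self hA'.1 hB'.1 hAB, ← re_trace_eq_sum_overlap_left,
      ← re_trace_eq_sum_overlap_right] at h
    linarith
  · rcases mul_eq_zero.1 hk with hb | hw0
    · exact hAB.eigenvalues_mul_overlap_eq_zero hA'.1 hB'.1 hb
    · rw [hw0, mul_zero]

lemma tendsto_crossEntropy_add_smul_one (hP : 0 ≤ P) (hB : 0 ≤ B) (hPB : SupportedOn P B) :
    Tendsto (fun κ : ℝ => crossEntropy P (B + κ • (1 : Matrix n n ℂ))) (𝓝[>] 0)
      (𝓝 (crossEntropy P B)) := by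
  replace hP : P.IsHermitian := (nonneg_iff_posSemidef.1 hP).1
  replace hB : B.IsHermitian := (nonneg_iff_posSemidef.1 hB).1
  have hB' : IsSelfAdjoint B := hB
  have hcfc : ∀ κ : ℝ, cfc Real.log (B + κ • 1) = cfc (fun x => Real.log (x + κ)) B := by
    intro κ
    rw [cfc_comp' Real.log (fun x => x + κ) B ((B.finite_real_spectrum.image _).continuousOn _),
      cfc_add_const κ (fun x => x) B, cfc_id' ℝ B, Algebra.algebraMap_eq_smul_one]
  simp only [crossEntropy, hcfc, re_trace_mul_cfc hP hB]
  refine Tendsto.mono_left ?_ nhdsWithin_le_nhds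
  refine (tendsto_finsetSum _ fun k _ => ?_).neg
  rcases eq_or_ne (hB.eigenvalues k.2) 0 with hk | hk
  · have h := hPB.eigenvalues_mul_overlap_eq_zero hP hB (i := k.1) hk
    simp only [mul_right_comm _ _ (overlap hP hB k.1 k.2), h, zero_mul, tendsto_const_nhds]
  · refine (Tendsto.const_mul _ ?_).mul_const _
    have : ContinuousAt (fun κ => Real.log (hB.eigenvalues k.2 + κ)) 0 :=
      ContinuousAt.log (by fun_prop) (by simpa using hk)
    simpa [ContinuousAt] using this

lemma isStrictlyPositive_add_smul_one (hB : 0 ≤ B) {κ : ℝ} (hκ : 0 < κ) :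
    IsStrictlyPositive (B + κ • (1 : Matrix n n ℂ)) :=
  isStrictlyPositive_iff_posDef.2
    (PosDef.posSemidef_add (nonneg_iff_posSemidef.1 hB) (PosDef.one.smul hκ))

lemma crossEntropy_le_of_log_le (hP : 0 ≤ P) (h : cfc Real.log A ≤ cfc Real.log B) :
    crossEntropy P B ≤ crossEntropy P A :=
  neg_le_neg (re_trace_mul_le_re_trace_mul hP h)

open scoped Matrix.Norms.L2Operator in
lemma crossEntropy_anti_right (hP : 0 ≤ P) (hA : 0 ≤ A) (hAB : A ≤ B) (hPA : SupportedOn P A) :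
    crossEntropy P B ≤ crossEntropy P A := by
  refine le_of_tendsto_of_tendsto
    (tendsto_crossEntropy_add_smul_one hP (hA.trans hAB) (hPA.mono hA hAB))
    (tendsto_crossEntropy_add_smul_one hP hA hPA) ?_
  filter_upwards [self_mem_nhdsWithin] with κ hκ
  exact crossEntropy_le_of_log_le hP
    (CFC.log_le_log (by gcongr) (isStrictlyPositive_add_smul_one hA hκ))

open scoped Matrix.Norms.L2Operator in
lemma crossEntropy_sum_smul_le {ι : Type*} {s : Finset ι} {w : ι → ℝ} {B : ι → Matrix n n ℂ}
    (hP : 0 ≤ P) (hw0 : ∀ i ∈ s, 0 ≤ w i) (hw1 : ∑ i ∈ s, w i = 1) (hB : ∀ i ∈ s, 0 ≤ B i)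
    (hPB : ∀ i ∈ s, w i ≠ 0 → SupportedOn P (B i)) :
    crossEntropy P (∑ i ∈ s, w i • B i) ≤ ∑ i ∈ s, w i * crossEntropy P (B i) := by
  have hwB : ∀ i ∈ s, 0 ≤ w i • B i := fun i hi => smul_nonneg (hw0 i hi) (hB i hi)
  have hsupp : SupportedOn P (∑ i ∈ s, w i • B i) :=
    .sum_smul_right hw0 (hw1.trans_ne one_ne_zero) hB hPB
  have hterm : ∀ i ∈ s, Tendsto (fun κ : ℝ => w i * crossEntropy P (B i + κ • 1)) (𝓝[>] 0)
      (𝓝 (w i * crossEntropy P (B i))) := by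
    intro i hi
    rcases eq_or_ne (w i) 0 with hwi | hwi
    · simp only [hwi, zero_mul, tendsto_const_nhds]
    · exact (tendsto_crossEntropy_add_smul_one hP (hB i hi) (hPB i hi hwi)).const_mul (w i)
  refine le_of_tendsto_of_tendsto
    (tendsto_crossEntropy_add_smul_one hP (Finset.sum_nonneg hwB) hsupp)
    (tendsto_finsetSum s hterm) ?_
  filter_upwards [self_mem_nhdsWithin] with κ hκ
  have hsum : ∑ i ∈ s, w i • (B i + κ • (1 : Matrix n n ℂ)) = ∑ i ∈ s, w i • B i + κ • 1 := by
    simp only [smul_add, Finset.sum_add_distrib, ← Finset.sum_smul, hw1, one_smul]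
  have hlog : ∑ i ∈ s, w i • cfc Real.log (B i + κ • (1 : Matrix n n ℂ)) ≤
      cfc Real.log (∑ i ∈ s, w i • B i + κ • 1) :=
    hsum ▸ CFC.concaveOn_log.le_map_sum hw0 hw1
      fun i hi => isStrictlyPositive_add_smul_one (hB i hi) hκ
  have h := re_trace_mul_le_re_trace_mul hP hlog
  simp only [Finset.mul_sum, trace_sum, Complex.re_sum,
    mul_smul_comm, trace_smul, Complex.smul_re, smul_eq_mul] at h
  simp only [crossEntropy, mul_neg, Finset.sum_neg_distrib]
  linarith

end CrossEntropy

section CondEntropy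

variable {n ι : Type*} [Fintype n] [DecidableEq n] [Fintype ι] {A N : ι → Matrix n n ℂ}
  {ν : ι → ℝ} {τ : Matrix n n ℂ}

/-- The conditional entropy `S(X|B)`, in nats, of the possibly unnormalised classical-quantum state
`∑ x, |x⟩⟨x| ⊗ A x`. -/
def condEntropy (A : ι → Matrix n n ℂ) : ℝ :=
  ∑ x, crossEntropy (A x) (A x) - crossEntropy (∑ x, A x) (∑ x, A x)

lemma condEntropy_eq_sum_sub (A : ι → Matrix n n ℂ) :
    condEntropy A = ∑ x, (crossEntropy (A x) (A x) - crossEntropy (A x) (∑ y, A y)) := by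
  rw [condEntropy, crossEntropy_sum_left, Finset.sum_sub_distrib]

lemma condEntropy_nonneg (hA : ∀ x, 0 ≤ A x) : 0 ≤ condEntropy A := by
  rw [condEntropy_eq_sum_sub]
  refine Finset.sum_nonneg fun x _ => sub_nonneg.2 ?_
  exact crossEntropy_anti_right (hA x) (hA x)
    (Finset.single_le_sum (fun y _ => hA y) (Finset.mem_univ x)) (supportedOn_of_le (hA x) le_rfl)

-- The rescaled blocks `(ν x)⁻¹ • A x` have `ν`-average at most `∑ x, A x`, so the operator
-- convexity of `-log` applies with weights `ν`.
lemma sum_negMulLog_le_sum_crossEntropy_smul_sub (hν0 : ∀ x, 0 ≤ ν x) (hν1 : ∑ x, ν x = 1)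
    (hτ0 : 0 ≤ τ) (hτ1 : τ.trace.re = 1) (h : ∀ x, ν x • τ ≤ A x) :
    ∑ x, Real.negMulLog (ν x) ≤
      ∑ x, (crossEntropy (ν x • τ) (A x) - crossEntropy (ν x • τ) (∑ y, A y)) := by
  have hA : ∀ x, 0 ≤ A x := fun x => (smul_nonneg (hν0 x) hτ0).trans (h x)
  have hsupp : ∀ x, ν x ≠ 0 → SupportedOn τ (A x) := fun x =>
    (supportedOn_of_le (smul_nonneg (hν0 x) hτ0) (h x)).of_smul_left
  have hB : ∀ x, 0 ≤ (ν x)⁻¹ • A x := fun x => smul_nonneg (inv_nonneg.2 (hν0 x)) (hA x)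
  have hle : ∑ x, ν x • (ν x)⁻¹ • A x ≤ ∑ x, A x := by
    refine Finset.sum_le_sum fun x _ => ?_
    rcases eq_or_ne (ν x) 0 with hx | hx
    · simpa only [hx, zero_smul] using hA x
    · rw [smul_inv_smul₀ hx]
  have hscale : ∀ x, ν x * crossEntropy τ ((ν x)⁻¹ • A x) =
      crossEntropy (ν x • τ) (A x) - Real.negMulLog (ν x) := by
    intro x
    rcases eq_or_ne (ν x) 0 with hx | hx
    · simp only [hx, crossEntropy_smul_left, zero_mul, Real.negMulLog_zero, sub_zero]
    · rw [crossEntropy_smul_left, crossEntropy_smul_right (nonneg_iff_posSemidef.1 hτ0).1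
        (nonneg_iff_posSemidef.1 (hA x)).1 (hsupp x hx)
        (inv_ne_zero hx), Real.log_inv, hτ1, Real.negMulLog]
      ring
  have hsuppB : ∀ x, ν x ≠ 0 → SupportedOn τ ((ν x)⁻¹ • A x) := fun x hx =>
    (hsupp x hx).smul_right (inv_ne_zero hx)
  have hconv : crossEntropy τ (∑ x, A x) ≤
      ∑ x, (crossEntropy (ν x • τ) (A x) - Real.negMulLog (ν x)) := by
    simp only [← hscale]
    exact (crossEntropy_anti_right hτ0
      (Finset.sum_nonneg fun x _ => smul_nonneg (hν0 x) (hB x)) hle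
      (.sum_smul_right (fun x _ => hν0 x) (hν1.trans_ne one_ne_zero) (fun x _ => hB x)
        fun x _ => hsuppB x)).trans
      (crossEntropy_sum_smul_le hτ0 (fun x _ => hν0 x) hν1 (fun x _ => hB x) fun x _ => hsuppB x)
  have hτsum : ∑ x, crossEntropy (ν x • τ) (∑ y, A y) = crossEntropy τ (∑ y, A y) := by
    rw [← crossEntropy_sum_left, ← Finset.sum_smul, hν1, one_smul]
  rw [Finset.sum_sub_distrib] at hconv ⊢
  linarith

lemma sum_negMulLog_le_condEntropy (hν0 : ∀ x, 0 ≤ ν x) (hν1 : ∑ x, ν x = 1) (hτ0 : 0 ≤ τ)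
    (hτ1 : τ.trace.re = 1) (h : ∀ x, ν x • τ ≤ A x) :
    ∑ x, Real.negMulLog (ν x) ≤ condEntropy A := by
  refine (sum_negMulLog_le_sum_crossEntropy_smul_sub hν0 hν1 hτ0 hτ1 h).trans ?_
  rw [condEntropy_eq_sum_sub]
  refine Finset.sum_le_sum fun x _ => ?_
  have hT : ∀ y, 0 ≤ ν y • τ := fun y => smul_nonneg (hν0 y) hτ0
  have hA : ∀ y, 0 ≤ A y := fun y => (hT y).trans (h y)
  have hR : 0 ≤ A x - ν x • τ := sub_nonneg.2 (h x)
  have hmono : crossEntropy (A x - ν x • τ) (∑ y, A y) ≤ crossEntropy (A x - ν x • τ) (A x) :=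
    crossEntropy_anti_right hR (hA x)
      (Finset.single_le_sum (fun y _ => hA y) (Finset.mem_univ x))
      (supportedOn_of_le hR (sub_le_self _ (hT x)))
  have hsplit := crossEntropy_add_left (ν x • τ) (A x - ν x • τ)
  simp only [add_sub_cancel] at hsplit
  rw [hsplit (A x), hsplit (∑ y, A y)]
  linarith

lemma condEntropy_le_sum_negMulLog_sub (hA : ∀ x, 0 ≤ A x) :
    condEntropy A ≤
      ∑ x, Real.negMulLog (A x).trace.re - Real.negMulLog (∑ x, A x).trace.re := by
  set σ := ∑ x, A x with hσ
  have hσ0 : 0 ≤ σ := Finset.sum_nonneg fun x _ => hA x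
  have htr : Real.negMulLog σ.trace.re = ∑ x, -(A x).trace.re * Real.log σ.trace.re := by
    rw [Real.negMulLog, ← Finset.sum_mul, Finset.sum_neg_distrib, hσ, trace_sum, Complex.re_sum]
  rw [condEntropy_eq_sum_sub, htr, ← Finset.sum_sub_distrib]
  refine Finset.sum_le_sum fun x _ => ?_
  have := klein_inequality (hA x) hσ0
    (supportedOn_of_le (hA x) (Finset.single_le_sum (fun y _ => hA y) (Finset.mem_univ x)))
  rw [Real.negMulLog]
  linarith

lemma condEntropy_le_mul_log_card (hA : ∀ x, 0 ≤ A x) :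
    condEntropy A ≤ (∑ x, A x).trace.re * Real.log (Fintype.card ι) := by
  have h := sum_negMulLog_le fun x => re_trace_nonneg (hA x)
  rw [← Complex.re_sum, ← trace_sum] at h
  linarith [condEntropy_le_sum_negMulLog_sub hA]

lemma crossEntropy_self_add_self_le {A B : Matrix n n ℂ} (hA : 0 ≤ A) (hB : 0 ≤ B) :
    crossEntropy (A + B) (A + B) ≤ crossEntropy A A + crossEntropy B B := by
  rw [crossEntropy_add_left]
  exact add_le_add
    (crossEntropy_anti_right hA hA (le_add_of_nonneg_right hB) (supportedOn_of_le hA le_rfl))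
    (crossEntropy_anti_right hB hB (le_add_of_nonneg_left hA) (supportedOn_of_le hB le_rfl))

lemma condEntropy_add_le (hA : ∀ x, 0 ≤ A x) (hN : ∀ x, 0 ≤ N x) :
    condEntropy (A + N) ≤ condEntropy A + condEntropy N +
      (Real.negMulLog (∑ x, A x).trace.re + Real.negMulLog (∑ x, N x).trace.re -
        Real.negMulLog ((∑ x, A x).trace.re + (∑ x, N x).trace.re)) := by
  have hblocks : ∑ x, crossEntropy (A x + N x) (A x + N x) ≤
      ∑ x, crossEntropy (A x) (A x) + ∑ x, crossEntropy (N x) (N x) := by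
    rw [← Finset.sum_add_distrib]
    exact Finset.sum_le_sum fun x _ => crossEntropy_self_add_self_le (hA x) (hN x)
  have hmix := condEntropy_le_sum_negMulLog_sub (A := ![∑ x, A x, ∑ x, N x]) <|
    Fin.forall_fin_two.2 ⟨Finset.sum_nonneg fun x _ => hA x, Finset.sum_nonneg fun x _ => hN x⟩
  simp only [condEntropy, Fin.sum_univ_two, cons_val_zero, cons_val_one, trace_add,
    Complex.add_re] at hmix
  simp only [condEntropy, Pi.add_apply, Finset.sum_add_distrib] at hblocks ⊢
  linarith

end CondEntropy

section Jordan

variable {n : Type*} [Fintype n] [DecidableEq n] {A : Matrix n n ℂ}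

lemma eigs_eq (hA : A.IsHermitian) : eigs A = hA.eigenvalues :=
  dif_pos hA

lemma sum_eigs_eq_sum_roots (hA : A.IsHermitian) (f : ℝ → ℝ) :
    ∑ i, f (eigs A i) = (A.charpoly.roots.map fun z => f z.re).sum := by
  rw [hA.roots_charpoly_eq_eigenvalues, eigs_eq hA, Multiset.map_map]
  simp

lemma exists_nonneg_neg_le_trace_eq (hA : A.IsHermitian) :
    ∃ N : Matrix n n ℂ, 0 ≤ N ∧ -A ≤ N ∧ 2 * N.trace.re = ∑ i, |eigs A i| - A.trace.re := by
  have hA' : IsSelfAdjoint A := hA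
  have htr : A.trace.re = ∑ i, hA.eigenvalues i := by
    simp only [hA.trace_eq_sum_eigenvalues, Complex.re_sum, RCLike.ofReal_eq_complex_ofReal,
      Complex.ofReal_re]
  refine ⟨cfc (fun x : ℝ => x⁻) A, cfc_nonneg fun x _ => negPart_nonneg x, ?_, ?_⟩
  · rw [← cfc_neg_id (R := ℝ) (a := A)]
    exact cfc_mono (fun x _ => neg_le_negPart x) (by fun_prop)
      (A.finite_real_spectrum.continuousOn _)
  · rw [trace_cfc hA, htr, eigs_eq hA, Complex.re_sum, Finset.mul_sum, ← Finset.sum_sub_distrib]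
    refine Finset.sum_congr rfl fun i _ => ?_
    rw [Complex.ofReal_re]
    linarith [posPart_add_negPart (hA.eigenvalues i), posPart_sub_negPart (hA.eigenvalues i)]

end Jordan

section ClassicalQuantum

variable {ι n : Type*} [DecidableEq ι]

/-- The block diagonal matrix `∑ x, |x⟩⟨x| ⊗ M x` of a classical-quantum state. -/
def cqMat (M : ι → Matrix n n ℂ) : Matrix (ι × n) (ι × n) ℂ :=
  reindex (Equiv.prodComm n ι) (Equiv.prodComm n ι) (blockDiagonal M)

lemma cqMat_apply (M : ι → Matrix n n ℂ) (p q : ι × n) :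
    cqMat M p q = if p.1 = q.1 then M p.1 p.2 q.2 else 0 := rfl

lemma cqMat_sub (M N : ι → Matrix n n ℂ) : cqMat M - cqMat N = cqMat (M - N) := by
  rw [cqMat, cqMat, cqMat, blockDiagonal_sub]
  rfl

lemma isHermitian_cqMat {M : ι → Matrix n n ℂ} (hM : ∀ x, (M x).IsHermitian) :
    (cqMat M).IsHermitian := by
  rw [IsHermitian, cqMat, conjTranspose_reindex, blockDiagonal_conjTranspose, funext hM]

lemma diagonal_kronecker_eq_cqMat (ν : ι → ℝ) (τ : Matrix n n ℂ) :
    diagonal (fun x => (ν x : ℂ)) ⊗ₖ τ = cqMat fun x => ν x • τ :=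
  diagonal_kronecker _ _

lemma sum_smul_outerPr_stdb_kronecker [Fintype ι] (μ : ι → ℝ) (ρ : ι → Matrix n n ℂ) :
    ∑ x, μ x • (outerPr (stdb x) ⊗ₖ ρ x) = cqMat fun x => μ x • ρ x := by
  ext ⟨x, i⟩ ⟨y, j⟩
  rw [Matrix.sum_apply, cqMat_apply, Finset.sum_eq_single x]
  · by_cases h : x = y
    · simp [outerPr, stdb, h]
    · simp [outerPr, stdb, h, Ne.symm h]
  · intro z _ hz
    simp [outerPr, stdb, hz.symm]
  · simp

lemma ptraceL_cqMat [Fintype ι] (M : ι → Matrix n n ℂ) : ptraceL (cqMat M) = ∑ x, M x := by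
  ext i j
  simp [ptraceL, cqMat_apply, Matrix.sum_apply]

lemma ptraceR_cqMat [Fintype n] (M : ι → Matrix n n ℂ) :
    ptraceR (cqMat M) = diagonal fun x => (M x).trace := by
  ext x y
  by_cases h : x = y
  · subst h
    simp [ptraceR, cqMat_apply, Matrix.trace]
  · simp [ptraceR, cqMat_apply, h]

lemma ptraceL_sum_smul_outerPr_stdb_kronecker [Fintype ι] (μ : ι → ℝ) (ρ : ι → Matrix n n ℂ) :
    ptraceL (∑ x, μ x • (outerPr (stdb x) ⊗ₖ ρ x)) = ∑ x, μ x • ρ x := by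
  rw [sum_smul_outerPr_stdb_kronecker, ptraceL_cqMat]

lemma ptraceR_sum_smul_outerPr_stdb_kronecker [Fintype ι] [Fintype n] (μ : ι → ℝ)
    {ρ : ι → Matrix n n ℂ} (hρ : ∀ x, (ρ x).trace = 1) :
    ptraceR (∑ x, μ x • (outerPr (stdb x) ⊗ₖ ρ x)) = diagonal fun x => (μ x : ℂ) := by
  simp only [sum_smul_outerPr_stdb_kronecker, ptraceR_cqMat, trace_smul, hρ, Complex.real_smul,
    mul_one]

variable [Fintype ι] [Fintype n] [DecidableEq n]

lemma charpoly_blockDiagonal (M : ι → Matrix n n ℂ) :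
    (blockDiagonal M).charpoly = ∏ x, (M x).charpoly := by
  have h : (blockDiagonal M).charmatrix = blockDiagonal fun x => (M x).charmatrix := by
    ext ⟨i, x⟩ ⟨j, y⟩ : 2
    by_cases hxy : x = y
    · subst hxy
      simp [charmatrix_apply, blockDiagonal_apply, diagonal_apply]
    · simp [blockDiagonal_apply, hxy]
  rw [Matrix.charpoly, h, det_blockDiagonal]
  rfl

lemma sum_eigs_cqMat {M : ι → Matrix n n ℂ} (hM : ∀ x, (M x).IsHermitian) (f : ℝ → ℝ) :
    ∑ p, f (eigs (cqMat M) p) = ∑ x, ∑ i, f (eigs (M x) i) := by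
  rw [sum_eigs_eq_sum_roots (isHermitian_cqMat hM), cqMat, charpoly_reindex,
    charpoly_blockDiagonal, Polynomial.roots_prod, Multiset.map_bind, Multiset.sum_bind]
  · exact Finset.sum_congr rfl fun x _ => (sum_eigs_eq_sum_roots (hM x) f).symm
  · exact Finset.prod_ne_zero_iff.2 fun x _ => (charpoly_monic _).ne_zero

lemma sum_eigs_diagonal (f : ℝ → ℝ) (v : n → ℝ) :
    ∑ i, f (eigs (diagonal fun i => (v i : ℂ)) i) = ∑ i, f (v i) := by
  have hv : (diagonal fun i => (v i : ℂ)).IsHermitian :=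
    isHermitian_diagonal_of_self_adjoint _ (funext fun i => Complex.conj_ofReal (v i))
  rw [sum_eigs_eq_sum_roots hv, charpoly_diagonal, Polynomial.roots_prod]
  · simp
  · simp [Finset.prod_ne_zero_iff, Polynomial.X_sub_C_ne_zero]

lemma vnEntropy_diagonal (ν : n → ℝ) : vnEntropy (diagonal fun i => (ν i : ℂ)) = shEnt ν :=
  sum_eigs_diagonal (fun x => -(x * Real.logb 2 x)) ν

lemma neg_mul_logb_two (x : ℝ) : -(x * Real.logb 2 x) = Real.negMulLog x / Real.log 2 := by
  rw [Real.negMulLog, Real.logb]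
  ring

lemma shEnt_eq {X : Type*} [Fintype X] (ν : X → ℝ) :
    shEnt ν = (∑ x, Real.negMulLog (ν x)) / Real.log 2 := by
  simp only [shEnt, neg_mul_logb_two, Finset.sum_div]

lemma vnEntropy_eq_crossEntropy {A : Matrix n n ℂ} (hA : A.IsHermitian) :
    vnEntropy A = crossEntropy A A / Real.log 2 := by
  simp only [vnEntropy, neg_mul_logb_two, crossEntropy_self hA, eigs_eq hA, Finset.sum_div]

lemma vnEntropy_cqMat {A : ι → Matrix n n ℂ} (hA : ∀ x, (A x).IsHermitian) :
    vnEntropy (cqMat A) = (∑ x, crossEntropy (A x) (A x)) / Real.log 2 := by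
  rw [vnEntropy, sum_eigs_cqMat hA fun x => -(x * Real.logb 2 x), Finset.sum_div]
  exact Finset.sum_congr rfl fun x _ => vnEntropy_eq_crossEntropy (hA x)

lemma vnEntropy_cqMat_sub_vnEntropy_ptraceL {A : ι → Matrix n n ℂ} (hA : ∀ x, 0 ≤ A x) :
    vnEntropy (cqMat A) - vnEntropy (ptraceL (cqMat A)) = condEntropy A / Real.log 2 := by
  have hσ : 0 ≤ ∑ x, A x := Finset.sum_nonneg fun x _ => hA x
  rw [ptraceL_cqMat, vnEntropy_cqMat fun x => (nonneg_iff_posSemidef.1 (hA x)).1,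
    vnEntropy_eq_crossEntropy (nonneg_iff_posSemidef.1 hσ).1, condEntropy, sub_div]

lemma traceDist_cqMat {A T : ι → Matrix n n ℂ} (hA : ∀ x, (A x).IsHermitian)
    (hT : ∀ x, (T x).IsHermitian) :
    traceDist (cqMat A) (cqMat T) = 1 / 2 * ∑ x, ∑ i, |eigs (A x - T x) i| := by
  have h : ∀ x, ((A - T) x).IsHermitian := fun x => (hA x).sub (hT x)
  rw [traceDist, cqMat_sub, sum_eigs_cqMat h fun x => |x|]
  rfl

lemma exists_nonneg_le_add_trace_eq_traceDist {A T : ι → Matrix n n ℂ}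
    (hA : ∀ x, (A x).IsHermitian) (hT : ∀ x, (T x).IsHermitian)
    (htr : (∑ x, A x).trace.re = (∑ x, T x).trace.re) :
    ∃ N : ι → Matrix n n ℂ, (∀ x, 0 ≤ N x) ∧ (∀ x, T x ≤ A x + N x) ∧
      (∑ x, N x).trace.re = traceDist (cqMat A) (cqMat T) := by
  choose N hN0 hN hNtr using fun x => exists_nonneg_neg_le_trace_eq ((hA x).sub (hT x))
  refine ⟨N, hN0, fun x => ?_, ?_⟩
  · have := hN x
    rwa [neg_sub, sub_le_iff_le_add'] at this
  · have hsum := Finset.sum_congr rfl fun x (_ : x ∈ Finset.univ) => hNtr x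
    simp only [← Finset.mul_sum, Finset.sum_sub_distrib, trace_sub, Complex.sub_re] at hsum
    simp only [trace_sum, Complex.re_sum] at htr
    rw [traceDist_cqMat hA hT, trace_sum, Complex.re_sum]
    linarith

lemma sum_negMulLog_sub_condEntropy_le {A : ι → Matrix n n ℂ} {ν : ι → ℝ} {τ : Matrix n n ℂ}
    (hA : ∀ x, 0 ≤ A x) (hA1 : (∑ x, A x).trace.re = 1) (hν0 : ∀ x, 0 ≤ ν x)
    (hν1 : ∑ x, ν x = 1) (hτ0 : 0 ≤ τ) (hτ1 : τ.trace.re = 1) :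
    ∑ x, Real.negMulLog (ν x) - condEntropy A ≤
      √(2 * traceDist (cqMat A) (cqMat fun x => ν x • τ)) * Real.log (Fintype.card ι) +
        Real.log 2 / Real.exp 1 := by
  have hT1 : (∑ x, ν x • τ).trace.re = 1 := by rw [← Finset.sum_smul, hν1, one_smul, hτ1]
  obtain ⟨N, hN0, hTN, hNtr⟩ := exists_nonneg_le_add_trace_eq_traceDist
    (fun x => (nonneg_iff_posSemidef.1 (hA x)).1)
    (fun x => (nonneg_iff_posSemidef.1 (smul_nonneg (hν0 x) hτ0)).1) (hA1.trans hT1.symm)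
  rw [← hNtr]
  refine le_sqrt_two_mul_mul_add (re_trace_nonneg (Finset.sum_nonneg fun x _ => hN0 x))
    (Real.log_natCast_nonneg _) ?_ ?_
  · have h := sum_negMulLog_le hν0
    rw [hν1, one_mul, Real.negMulLog_one, add_zero] at h
    linarith [condEntropy_nonneg hA]
  · have hmono : ∑ x, Real.negMulLog (ν x) ≤ condEntropy (A + N) :=
      sum_negMulLog_le_condEntropy hν0 hν1 hτ0 hτ1 hTN
    have hsub := condEntropy_add_le hA hN0
    have hcard := condEntropy_le_mul_log_card hN0
    have hη : Real.negMulLog (1 + (∑ x, N x).trace.re) =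
        -((1 + (∑ x, N x).trace.re) * Real.log (1 + (∑ x, N x).trace.re)) := by
      rw [Real.negMulLog, neg_mul]
    rw [hA1, Real.negMulLog_one, hη] at hsub
    linarith

end ClassicalQuantum

section AlmostProduct

variable {X B : Type*} [Fintype X] [Fintype B] [DecidableEq B] {μ : X → ℝ}
  {ρB : X → Matrix B B ℂ}

lemma isDensity_sum_smul (hμ0 : ∀ x, 0 ≤ μ x) (hμ1 : ∑ x, μ x = 1)
    (hρB : ∀ x, IsDensity (ρB x)) : IsDensity (∑ x, μ x • ρB x) := by
  refine ⟨nonneg_iff_posSemidef.1 <| Finset.sum_nonneg fun x _ =>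
    smul_nonneg (hμ0 x) (nonneg_iff_posSemidef.2 (hρB x).1), ?_⟩
  simp only [trace_sum, trace_smul, (hρB _).2, ← Finset.sum_smul, hμ1, one_smul]

theorem cond_entropy_of_almost_product_general [DecidableEq X]
    (hμ0 : ∀ x, 0 ≤ μ x) (hμ1 : ∑ x, μ x = 1) (hρB : ∀ x, IsDensity (ρB x))
    {ν : X → ℝ} (hν0 : ∀ x, 0 ≤ ν x) (hν1 : ∑ x, ν x = 1)
    {τ : Matrix B B ℂ} (hτ : IsDensity τ) {ε : ℝ} {ρXB : Matrix (X × B) (X × B) ℂ}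
    (hXB : ρXB = ∑ x, μ x • (outerPr (stdb x) ⊗ₖ ρB x))
    (hε : traceDist ρXB (diagonal (fun x => (ν x : ℂ)) ⊗ₖ τ) ≤ ε) :
    vnEntropy ρXB - vnEntropy (ptraceL ρXB) ≥
      shEnt ν - √(2 * ε) * Real.logb 2 (Fintype.card X) - 1 / Real.exp 1 := by
  have hA : ∀ x, 0 ≤ μ x • ρB x := fun x =>
    smul_nonneg (hμ0 x) (nonneg_iff_posSemidef.2 (hρB x).1)
  have hA1 := congrArg Complex.re (isDensity_sum_smul hμ0 hμ1 hρB).2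
  rw [hXB, sum_smul_outerPr_stdb_kronecker] at hε ⊢
  rw [diagonal_kronecker_eq_cqMat] at hε
  have hnats : ∑ x, Real.negMulLog (ν x) - condEntropy (fun x => μ x • ρB x) ≤
      √(2 * ε) * Real.log (Fintype.card X) + Real.log 2 / Real.exp 1 := by
    refine (sum_negMulLog_sub_condEntropy_le hA hA1 hν0 hν1 (nonneg_iff_posSemidef.2 hτ.1)
      (congrArg Complex.re hτ.2)).trans ?_
    gcongr
  rw [vnEntropy_cqMat_sub_vnEntropy_ptraceL hA, shEnt_eq, Real.logb]
  have hbits := div_le_div_of_nonneg_right hnats (Real.log_pos one_lt_two).le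
  rw [sub_div, add_div, div_right_comm, div_self (Real.log_pos one_lt_two).ne', mul_div_assoc]
    at hbits
  linarith

end AlmostProduct

/-- If a cq-state `ρ_{XB} = Σ_x μ_x |x⟩⟨x| ⊗ ρ_B^x` is ε-close to the
product of its marginals, then `S(X|B) ≥ S(X) - √(2ε) log₂ d - 1/e`. -/
theorem cond_entropy_of_almost_product
    {d dB : ℕ} (μ : Fin d → ℝ) (hμ0 : ∀ x, 0 ≤ μ x) (hμ1 : ∑ x, μ x = 1)
    (ρB : Fin d → Matrix (Fin dB) (Fin dB) ℂ) (hρB : ∀ x, IsDensity (ρB x))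
    (ε : ℝ)
    (ρXB : Matrix (Fin d × Fin dB) (Fin d × Fin dB) ℂ)
    (hXB : ρXB = ∑ x, μ x • (outerPr (stdb x) ⊗ₖ ρB x))
    (hε : traceDist ρXB (ptraceR ρXB ⊗ₖ ptraceL ρXB) ≤ ε) :
    vnEntropy ρXB - vnEntropy (ptraceL ρXB)
      ≥ vnEntropy (ptraceR ρXB) - Real.sqrt (2 * ε) * Real.logb 2 d - 1 / Real.exp 1 := by
  have hX : ptraceR ρXB = diagonal fun x => (μ x : ℂ) :=
    hXB ▸ ptraceR_sum_smul_outerPr_stdb_kronecker μ fun x => (hρB x).2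
  have hB : ptraceL ρXB = ∑ x, μ x • ρB x :=
    hXB ▸ ptraceL_sum_smul_outerPr_stdb_kronecker μ ρB
  rw [hX, vnEntropy_diagonal]
  simpa only [Fintype.card_fin] using cond_entropy_of_almost_product_general hμ0 hμ1 hρB hμ0 hμ1
    (hB ▸ isDensity_sum_smul hμ0 hμ1 hρB) hXB (hX ▸ hε)
end
end

section
/- Let ρ_U be a density operator on ℂ^d, let {E_z}_{z∈𝒵} (𝒵 finite) be a trace-preserving measurement on ℂ^d, let ρ_Ũ := Σ_{z∈𝒵} E_z ρ_U E_z† be the post-measurement state, and let Z be the classical outcome with distribution P_Z(z) := tr(E_z ρ_U E_z†). Then for all ε, ε' > 0: S_0^{ε+ε'}(ρ_Ũ) ≤ S_0^ε(ρ_U) + H_0^{ε'}(P_Z). -/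
open scoped Matrix Kronecker BigOperators ComplexOrder
open Matrix

noncomputable section

/-!
If `ρ = R + S` with `R` and `S` positive semidefinite, then `S_0^ε(ρ) ≤ log rank R` for every
`ε ≥ tr S`: by Ky Fan's principle, applied to the support projection of `R`, some `rank R`
eigenvalues of `ρ` have sum at least `tr R`. Conversely, truncating the spectral decomposition of
`ρ` gives such a splitting with `tr S ≤ ε` and `log rank R ≤ S_0^ε(ρ)`.

For a measurement `{E_z}`, take this splitting of `ρ` and a set `B` of outcomes with
`log |B| = H_0^{ε'}(P_Z)` whose complement has mass at most `ε'`. The part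
`Σ_{z ∈ B} E_z R E_z†` of the post-measurement state has rank at most `|B| · rank R`, and what
remains of the state has trace at most `ε + ε'`.
-/

section TopWeights

variable {n : Type*} [Fintype n]

theorem exists_finset_card_eq_forall_le {α : Type*} [LinearOrder α] (f : n → α) {m : ℕ}
    (hm : m ≤ Fintype.card n) :
    ∃ A : Finset n, A.card = m ∧ ∀ i ∈ A, ∀ j ∉ A, f j ≤ f i := by
  classical
  induction m with
  | zero => exact ⟨∅, by simp⟩
  | succ m ih =>
    obtain ⟨A, hA, hle⟩ := ih (by omega)
    have hne : (Aᶜ).Nonempty := by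
      rw [← Finset.card_pos, Finset.card_compl]
      omega
    obtain ⟨k, hk, hmax⟩ := Finset.exists_max_image Aᶜ f hne
    rw [Finset.mem_compl] at hk
    refine ⟨insert k A, by rw [Finset.card_insert_of_notMem hk, hA], fun i hi j hj => ?_⟩
    rw [Finset.mem_insert, not_or] at hj
    rcases Finset.mem_insert.1 hi with rfl | hi
    · exact hmax j (Finset.mem_compl.2 hj.2)
    · exact hle i hi j hj.2

theorem exists_finset_sum_mul_le_sum {𝕜 : Type*} [CommRing 𝕜] [LinearOrder 𝕜]
    [IsStrictOrderedRing 𝕜] {f p : n → 𝕜} (hf : ∀ i, 0 ≤ f i) (hp₀ : ∀ i, 0 ≤ p i)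
    (hp₁ : ∀ i, p i ≤ 1) {m : ℕ} (hp : ∑ i, p i ≤ m) :
    ∃ A : Finset n, A.card ≤ m ∧ ∑ i, p i * f i ≤ ∑ i ∈ A, f i := by
  classical
  rcases le_or_gt (Fintype.card n) m with hm | hm
  · exact ⟨Finset.univ, hm, Finset.sum_le_sum fun i _ => mul_le_of_le_one_left (hf i) (hp₁ i)⟩
  obtain ⟨A, hA, hle⟩ := exists_finset_card_eq_forall_le f hm.le
  have hne : (Aᶜ).Nonempty := by
    rw [← Finset.card_pos, Finset.card_compl]
    omega
  obtain ⟨k, hk, hmax⟩ := Finset.exists_max_image Aᶜ f hne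
  rw [Finset.mem_compl] at hk
  -- Subtracting the threshold `f k` makes the terms nonnegative on `A` and nonpositive off `A`.
  have hterm : ∀ i, p i * (f i - f k) ≤ if i ∈ A then f i - f k else 0 := by
    intro i
    split_ifs with hi
    · exact mul_le_of_le_one_left (sub_nonneg.2 (hle i hi k hk)) (hp₁ i)
    · exact mul_nonpos_of_nonneg_of_nonpos (hp₀ i)
        (sub_nonpos.2 (hmax i (Finset.mem_compl.2 hi)))
  refine ⟨A, hA.le, ?_⟩
  calc ∑ i, p i * f i = ∑ i, p i * (f i - f k) + (∑ i, p i) * f k := by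
        rw [Finset.sum_mul, ← Finset.sum_add_distrib]
        exact Finset.sum_congr rfl fun i _ => by ring
    _ ≤ (∑ i, if i ∈ A then f i - f k else 0) + m * f k :=
        add_le_add (Finset.sum_le_sum fun i _ => hterm i) (mul_le_mul_of_nonneg_right hp (hf k))
    _ = ∑ i ∈ A, f i := by
        rw [Finset.sum_ite_mem, Finset.univ_inter, Finset.sum_sub_distrib, Finset.sum_const, hA,
          nsmul_eq_mul, sub_add_cancel]

end TopWeights

section Rank

variable {K m n Z : Type*} [Field K] [Fintype n]

theorem rank_add_le_rank_add_rank [Finite m] (A B : Matrix m n K) :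
    (A + B).rank ≤ A.rank + B.rank := by
  have hadd : LinearMap.range (A + B).mulVecLin
      ≤ LinearMap.range A.mulVecLin ⊔ LinearMap.range B.mulVecLin := by
    rw [mulVecLin_add]
    exact LinearMap.range_add_le _ _
  exact (Submodule.finrank_mono hadd).trans (Submodule.finrank_add_le_finrank_add_finrank _ _)

theorem rank_sum_mul_mul_le {o : Type*} [Finite m] [Fintype o] (B : Finset Z)
    (E : Z → Matrix m n K) (R : Matrix n n K) (F : Z → Matrix n o K) :
    (∑ z ∈ B, E z * R * F z).rank ≤ B.card * R.rank := by
  classical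
  induction B using Finset.induction_on with
  | empty => simp
  | insert z B hz ih =>
    have hconj : (E z * R * F z).rank ≤ R.rank :=
      (rank_mul_le_left _ _).trans (rank_mul_le_right _ _)
    rw [Finset.sum_insert hz, Finset.card_insert_of_notMem hz, add_one_mul, add_comm]
    exact (rank_add_le_rank_add_rank _ _).trans (add_le_add ih hconj)

end Rank

section PosSemidef

open scoped MatrixOrder

variable {𝕜 m n Z : Type*} [RCLike 𝕜] [Fintype n]

theorem re_trace_mul_nonneg_s3 {A B : Matrix n n 𝕜} (hA : A.PosSemidef) (hB : B.PosSemidef) :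
    0 ≤ RCLike.re (A * B).trace := by
  classical
  obtain ⟨C, rfl⟩ := CStarAlgebra.nonneg_iff_eq_star_mul_self.mp hA.nonneg
  rw [mul_assoc, trace_mul_comm, star_eq_conjTranspose]
  exact (RCLike.nonneg_iff.1 (hB.mul_mul_conjTranspose_same C).trace_nonneg).1

theorem re_trace_sum_conj_le [Fintype m] [Fintype Z] [DecidableEq n] {E : Z → Matrix m n 𝕜}
    (hE : ∑ z, (E z)ᴴ * E z ≤ 1) {S : Matrix n n 𝕜} (hS : S.PosSemidef) :
    RCLike.re (∑ z, E z * S * (E z)ᴴ).trace ≤ RCLike.re S.trace := by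
  have hcycle : (∑ z, E z * S * (E z)ᴴ).trace = ((∑ z, (E z)ᴴ * E z) * S).trace := by
    rw [Finset.sum_mul, trace_sum, trace_sum]
    exact Finset.sum_congr rfl fun z _ => trace_mul_cycle _ _ _
  have hdefect := re_trace_mul_nonneg_s3 (le_iff.1 hE) hS
  rw [sub_mul, one_mul, trace_sub, map_sub] at hdefect
  rw [hcycle]
  exact sub_nonneg.1 hdefect

end PosSemidef

section EigenDiagonal

open scoped MatrixOrder

variable {𝕜 n : Type*} [RCLike 𝕜] [Fintype n] [DecidableEq n] {A : Matrix n n 𝕜}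

/-- The matrix which is diagonal in the chosen eigenbasis of the Hermitian matrix `A`, with the
entries of `f` on the diagonal. -/
def eigenDiagonal (hA : A.IsHermitian) (f : n → ℝ) : Matrix n n 𝕜 :=
  Unitary.conjStarAlgAut 𝕜 _ hA.eigenvectorUnitary (diagonal (RCLike.ofReal ∘ f))

theorem eigenDiagonal_eigenvalues (hA : A.IsHermitian) : eigenDiagonal hA hA.eigenvalues = A :=
  hA.spectral_theorem.symm

theorem eigenDiagonal_one (hA : A.IsHermitian) : eigenDiagonal hA 1 = 1 := by
  simp [eigenDiagonal, Function.comp_def]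

theorem eigenDiagonal_add (hA : A.IsHermitian) (f g : n → ℝ) :
    eigenDiagonal hA (f + g) = eigenDiagonal hA f + eigenDiagonal hA g := by
  simp only [eigenDiagonal, ← map_add, diagonal_add]
  simp [Function.comp_def]

theorem eigenDiagonal_mul (hA : A.IsHermitian) (f g : n → ℝ) :
    eigenDiagonal hA (f * g) = eigenDiagonal hA f * eigenDiagonal hA g := by
  simp only [eigenDiagonal, ← map_mul, diagonal_mul_diagonal]
  simp [Function.comp_def]

theorem trace_eigenDiagonal (hA : A.IsHermitian) (f : n → ℝ) :
    (eigenDiagonal hA f).trace = ((∑ i, f i : ℝ) : 𝕜) := by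
  simp [eigenDiagonal, trace_mul_cycle, trace_diagonal]

theorem re_trace_mul_eigenDiagonal (hA : A.IsHermitian) (B : Matrix n n 𝕜) (f : n → ℝ) :
    RCLike.re (B * eigenDiagonal hA f).trace = ∑ i, RCLike.re
      (((hA.eigenvectorUnitary : Matrix n n 𝕜)ᴴ * B * (hA.eigenvectorUnitary : Matrix n n 𝕜)) i i)
        * f i := by
  have hcycle : (B * eigenDiagonal hA f).trace
      = ((hA.eigenvectorUnitary : Matrix n n 𝕜)ᴴ * B * (hA.eigenvectorUnitary : Matrix n n 𝕜)
          * diagonal (RCLike.ofReal ∘ f)).trace := by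
    rw [eigenDiagonal, Unitary.conjStarAlgAut_apply, ← mul_assoc, trace_mul_comm]
    simp only [mul_assoc, star_eq_conjTranspose]
  rw [hcycle]
  simp [Matrix.trace]

theorem posSemidef_eigenDiagonal (hA : A.IsHermitian) {f : n → ℝ} (hf : ∀ i, 0 ≤ f i) :
    (eigenDiagonal hA f).PosSemidef :=
  (PosSemidef.diagonal fun i => RCLike.ofReal_nonneg.2 (hf i)).mul_mul_conjTranspose_same _

theorem rank_eigenDiagonal_le (hA : A.IsHermitian) {f : n → ℝ} {s : Finset n}
    (hf : ∀ i ∉ s, f i = 0) :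
    (eigenDiagonal hA f).rank ≤ s.card := by
  classical
  refine ((rank_mul_le_left _ _).trans (rank_mul_le_right _ _)).trans ?_
  rw [rank_diagonal, Fintype.card_subtype]
  refine Finset.card_le_card fun i hi => ?_
  by_contra his
  simp [hf i his] at hi

theorem exists_support_projection (hA : A.IsHermitian) :
    ∃ P : Matrix n n 𝕜, 0 ≤ P ∧ P ≤ 1 ∧ P * A = A ∧ P.trace = A.rank := by
  let f : n → ℝ := fun i => if hA.eigenvalues i = 0 then 0 else 1
  have hf : f + (1 - f) = 1 := add_sub_cancel f 1
  have hf_mul : f * hA.eigenvalues = hA.eigenvalues := by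
    ext i
    by_cases hi : hA.eigenvalues i = 0 <;> simp [f, hi]
  refine ⟨eigenDiagonal hA f, ?_, ?_, ?_, ?_⟩
  · refine (posSemidef_eigenDiagonal hA fun i => ?_).nonneg
    by_cases hi : hA.eigenvalues i = 0 <;> simp [f, hi]
  · rw [← eigenDiagonal_one hA, ← hf, eigenDiagonal_add]
    refine le_add_of_nonneg_right (posSemidef_eigenDiagonal hA fun i => ?_).nonneg
    by_cases hi : hA.eigenvalues i = 0 <;> simp [f, hi]
  · nth_rw 2 [← eigenDiagonal_eigenvalues hA]
    rw [← eigenDiagonal_mul, hf_mul, eigenDiagonal_eigenvalues]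
  · rw [trace_eigenDiagonal, hA.rank_eq_card_non_zero_eigs, Fintype.card_subtype]
    simp [f, Finset.sum_ite]

-- Ky Fan's maximum principle, for contractions `P` in place of projections.
theorem exists_finset_re_trace_mul_le_sum_eigenvalues {M P : Matrix n n 𝕜} (hM : M.PosSemidef)
    (hP₀ : 0 ≤ P) (hP₁ : P ≤ 1) {k : ℕ} (hk : RCLike.re P.trace ≤ k) :
    ∃ A : Finset n, A.card ≤ k ∧
      RCLike.re (P * M).trace ≤ ∑ i ∈ A, hM.isHermitian.eigenvalues i := by
  let U : Matrix n n 𝕜 := hM.isHermitian.eigenvectorUnitary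
  let p : n → ℝ := fun i => RCLike.re ((Uᴴ * P * U) i i)
  have hdiag {Q : Matrix n n 𝕜} (hQ : 0 ≤ Q) (i : n) : 0 ≤ RCLike.re ((Uᴴ * Q * U) i i) :=
    (RCLike.nonneg_iff.1 (hQ.posSemidef.conjTranspose_mul_mul_same U).diag_nonneg).1
  have hp₁ : ∀ i, p i ≤ 1 := fun i => by
    have hU : Uᴴ * U = 1 := Unitary.coe_star_mul_self _
    have hcompl := hdiag (sub_nonneg.2 hP₁) i
    rw [mul_sub, mul_one, sub_mul, hU] at hcompl
    simpa using hcompl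
  have hp_sum : ∑ i, p i = RCLike.re P.trace := by
    have h := re_trace_mul_eigenDiagonal hM.isHermitian P 1
    rw [eigenDiagonal_one, mul_one] at h
    simpa using h.symm
  have hp_mul : RCLike.re (P * M).trace = ∑ i, p i * hM.isHermitian.eigenvalues i := by
    rw [← re_trace_mul_eigenDiagonal, eigenDiagonal_eigenvalues]
  rw [hp_mul]
  exact exists_finset_sum_mul_le_sum hM.eigenvalues_nonneg (hdiag hP₀) hp₁ (hp_sum.trans_le hk)

theorem exists_finset_sum_compl_eigenvalues_le {R S : Matrix n n 𝕜} (hR : R.PosSemidef)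
    (hS : S.PosSemidef) :
    ∃ A : Finset n, A.card ≤ R.rank ∧
      ∑ i ∈ Aᶜ, (hR.add hS).isHermitian.eigenvalues i ≤ RCLike.re S.trace := by
  obtain ⟨P, hP₀, hP₁, hPR, hPtrace⟩ := exists_support_projection hR.isHermitian
  obtain ⟨A, hA, hle⟩ := exists_finset_re_trace_mul_le_sum_eigenvalues (hR.add hS) hP₀ hP₁
    (k := R.rank) (by simp [hPtrace])
  refine ⟨A, hA, ?_⟩
  have hPS : 0 ≤ RCLike.re (P * S).trace := re_trace_mul_nonneg_s3 hP₀.posSemidef hS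
  have htrace : RCLike.re R.trace + RCLike.re S.trace
      = ∑ i, (hR.add hS).isHermitian.eigenvalues i := by
    rw [← map_add, ← trace_add, (hR.add hS).isHermitian.trace_eq_sum_eigenvalues]
    simp
  rw [mul_add, hPR, trace_add, map_add] at hle
  rw [← Finset.sum_add_sum_compl A] at htrace
  linarith

end EigenDiagonal

section Logb

variable {b : ℝ} {m k : ℕ}

-- The junk value `Real.logb b 0 = 0` makes these bounds hold at `0` as well.
theorem logb_natCast_nonneg (hb : 1 < b) (m : ℕ) : 0 ≤ Real.logb b m :=
  div_nonneg (Real.log_natCast_nonneg m) (Real.log_nonneg hb.le)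

theorem logb_natCast_le_logb_natCast (hb : 1 < b) (h : m ≤ k) :
    Real.logb b m ≤ Real.logb b k := by
  rcases Nat.eq_zero_or_pos m with rfl | hm
  · simpa using logb_natCast_nonneg hb k
  · exact Real.logb_le_logb_of_le hb (mod_cast hm) (mod_cast h)

theorem logb_natCast_mul_le (hb : 1 < b) (m k : ℕ) :
    Real.logb b (m * k : ℕ) ≤ Real.logb b m + Real.logb b k := by
  rcases eq_or_ne m 0 with rfl | hm
  · simpa using logb_natCast_nonneg hb k
  rcases eq_or_ne k 0 with rfl | hk
  · simpa using logb_natCast_nonneg hb m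
  rw [Nat.cast_mul, Real.logb_mul (mod_cast hm) (mod_cast hk)]

end Logb

section SmoothEntropy

variable {X : Type*} [Fintype X]

theorem finite_setOf_H0smooth_candidates (P : X → ℝ) (ε : ℝ) :
    {r : ℝ | ∃ Q : X → ℝ, (∀ x, 0 ≤ Q x) ∧ (∑ x, |P x - Q x|) ≤ ε ∧
      r = Real.logb 2 (Nat.card {x : X // Q x ≠ 0})}.Finite := by
  refine (Set.finite_range fun A : Set X => Real.logb 2 (Nat.card A)).subset ?_
  rintro _ ⟨Q, -, -, rfl⟩
  exact ⟨{x | Q x ≠ 0}, rfl⟩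

variable [DecidableEq X] {P : X → ℝ} {ε : ℝ}

theorem H0smooth_le_logb_card {A : Finset X} (hP : ∀ x, 0 ≤ P x)
    (hA : ∑ x ∈ Aᶜ, P x ≤ ε) : H0smooth P ε ≤ Real.logb 2 A.card := by
  let Q : X → ℝ := fun x => if x ∈ A then P x else 0
  have hQ₀ : ∀ x, 0 ≤ Q x := fun x => ite_nonneg (hP x) le_rfl
  have hdist : ∑ x, |P x - Q x| = ∑ x ∈ Aᶜ, P x := by
    rw [← Finset.sum_add_sum_compl A, Finset.sum_eq_zero fun x hx => by simp [Q, hx], zero_add]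
    refine Finset.sum_congr rfl fun x hx => ?_
    simp [Q, Finset.mem_compl.1 hx, abs_of_nonneg (hP x)]
  have hcard : Nat.card {x // Q x ≠ 0} ≤ A.card := by
    rw [Nat.card_eq_fintype_card, Fintype.card_subtype]
    refine Finset.card_le_card fun x hx => ?_
    by_contra hxA
    simp [Q, hxA] at hx
  calc H0smooth P ε ≤ Real.logb 2 (Nat.card {x // Q x ≠ 0}) :=
        csInf_le (finite_setOf_H0smooth_candidates P ε).bddBelow ⟨Q, hQ₀, hdist.trans_le hA, rfl⟩
    _ ≤ Real.logb 2 A.card := logb_natCast_le_logb_natCast one_lt_two hcard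

theorem exists_finset_logb_card_eq_H0smooth (hP : ∀ x, 0 ≤ P x) (hε : 0 ≤ ε) :
    ∃ A : Finset X, ∑ x ∈ Aᶜ, P x ≤ ε ∧ Real.logb 2 A.card = H0smooth P ε := by
  obtain ⟨Q, -, hQ, hcard⟩ : H0smooth P ε ∈ _ :=
    Set.Nonempty.csInf_mem ⟨_, P, hP, by simpa using hε, rfl⟩ (finite_setOf_H0smooth_candidates P ε)
  refine ⟨Finset.univ.filter fun x => Q x ≠ 0, ?_, ?_⟩
  · calc ∑ x ∈ (Finset.univ.filter fun x => Q x ≠ 0)ᶜ, P x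
        ≤ ∑ x ∈ (Finset.univ.filter fun x => Q x ≠ 0)ᶜ, |P x - Q x| :=
          Finset.sum_le_sum fun x hx => by
            have hx : Q x = 0 := by simpa using hx
            simpa [hx] using le_abs_self (P x)
      _ ≤ ∑ x, |P x - Q x| := Finset.sum_le_univ_sum_of_nonneg fun x => abs_nonneg _
      _ ≤ ε := hQ
  · rw [hcard, Nat.card_eq_fintype_card, Fintype.card_subtype]

variable {n : Type*} [Fintype n] [DecidableEq n]

theorem S0smooth_eq_H0smooth_eigenvalues {ρ : Matrix n n ℂ} (hρ : ρ.IsHermitian) :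
    S0smooth ρ ε = H0smooth hρ.eigenvalues ε := by
  rw [S0smooth, eigs, dif_pos hρ]

theorem S0smooth_add_le_logb_rank {R S : Matrix n n ℂ} (hR : R.PosSemidef) (hS : S.PosSemidef)
    (hSε : S.trace.re ≤ ε) : S0smooth (R + S) ε ≤ Real.logb 2 R.rank := by
  obtain ⟨A, hA, hsum⟩ := exists_finset_sum_compl_eigenvalues_le hR hS
  rw [S0smooth_eq_H0smooth_eigenvalues (hR.add hS).isHermitian]
  exact (H0smooth_le_logb_card (hR.add hS).eigenvalues_nonneg (hsum.trans hSε)).trans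
    (logb_natCast_le_logb_natCast one_lt_two hA)

theorem exists_add_eq_logb_rank_le_S0smooth {ρ : Matrix n n ℂ} (hρ : ρ.PosSemidef) (hε : 0 ≤ ε) :
    ∃ R S : Matrix n n ℂ, R.PosSemidef ∧ S.PosSemidef ∧ R + S = ρ ∧ S.trace.re ≤ ε ∧
      Real.logb 2 R.rank ≤ S0smooth ρ ε := by
  have hμ := hρ.eigenvalues_nonneg
  obtain ⟨A, hA, hcard⟩ := exists_finset_logb_card_eq_H0smooth hμ hε
  let μ := hρ.isHermitian.eigenvalues
  let f : n → ℝ := fun i => if i ∈ A then μ i else 0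
  let g : n → ℝ := fun i => if i ∈ A then 0 else μ i
  have hfg : f + g = μ := by
    ext i
    by_cases hi : i ∈ A <;> simp [f, g, hi]
  refine ⟨eigenDiagonal hρ.isHermitian f, eigenDiagonal hρ.isHermitian g,
    posSemidef_eigenDiagonal _ fun i => ite_nonneg (hμ i) le_rfl,
    posSemidef_eigenDiagonal _ fun i => ite_nonneg le_rfl (hμ i), ?_, ?_, ?_⟩
  · rw [← eigenDiagonal_add, hfg, eigenDiagonal_eigenvalues]
  · rw [trace_eigenDiagonal]
    simpa [g, Finset.sum_ite, Finset.filter_notMem_eq_sdiff, Finset.compl_eq_univ_sdiff] using hA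
  · rw [S0smooth_eq_H0smooth_eigenvalues hρ.isHermitian, ← hcard]
    exact logb_natCast_le_logb_natCast one_lt_two
      (rank_eigenDiagonal_le hρ.isHermitian fun i hi => if_neg hi)

end SmoothEntropy

section Measurement

open scoped MatrixOrder

variable {m n Z : Type*} [Fintype m] [DecidableEq m] [Fintype n] [DecidableEq n] [Fintype Z]
  {E : Z → Matrix m n ℂ} {ε ε' : ℝ}

theorem S0smooth_sum_conj_add_le [DecidableEq Z] (hE : ∑ z, (E z)ᴴ * E z ≤ 1)
    {R S : Matrix n n ℂ} (hR : R.PosSemidef) (hS : S.PosSemidef) (hSε : S.trace.re ≤ ε)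
    {B : Finset Z} (hB : ∑ z ∈ Bᶜ, (E z * R * (E z)ᴴ).trace.re ≤ ε') :
    S0smooth (∑ z, E z * (R + S) * (E z)ᴴ) (ε + ε') ≤ Real.logb 2 (B.card * R.rank : ℕ) := by
  let M := ∑ z ∈ B, E z * R * (E z)ᴴ
  let N := ∑ z, E z * S * (E z)ᴴ + ∑ z ∈ Bᶜ, E z * R * (E z)ᴴ
  have hsplit : ∑ z, E z * (R + S) * (E z)ᴴ = M + N := by
    rw [add_left_comm, Finset.sum_add_sum_compl, ← Finset.sum_add_distrib]
    simp only [Matrix.mul_add, Matrix.add_mul, add_comm]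
  have hM : M.PosSemidef := posSemidef_sum _ fun z _ => hR.mul_mul_conjTranspose_same (E z)
  have hN : N.PosSemidef :=
    (posSemidef_sum _ fun z _ => hS.mul_mul_conjTranspose_same (E z)).add
      (posSemidef_sum _ fun z _ => hR.mul_mul_conjTranspose_same (E z))
  have hN_trace : N.trace.re ≤ ε + ε' := by
    rw [trace_add, Complex.add_re]
    refine add_le_add ((re_trace_sum_conj_le hE hS).trans hSε) ?_
    rwa [trace_sum, Complex.re_sum]
  rw [hsplit]
  exact (S0smooth_add_le_logb_rank hM hN hN_trace).trans
    (logb_natCast_le_logb_natCast one_lt_two (rank_sum_mul_mul_le B E R _))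

theorem S0_of_measurement_general (hE : ∑ z, (E z)ᴴ * E z ≤ 1) {ρ : Matrix n n ℂ}
    (hρ : ρ.PosSemidef) (hε : 0 ≤ ε) (hε' : 0 ≤ ε') :
    S0smooth (∑ z, E z * ρ * (E z)ᴴ) (ε + ε')
      ≤ S0smooth ρ ε + H0smooth (fun z => (E z * ρ * (E z)ᴴ).trace.re) ε' := by
  classical
  have hprob {T : Matrix n n ℂ} (hT : T.PosSemidef) (z : Z) : 0 ≤ (E z * T * (E z)ᴴ).trace.re :=
    (Complex.nonneg_iff.1 (hT.mul_mul_conjTranspose_same (E z)).trace_nonneg).1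
  obtain ⟨R, S, hR, hS, rfl, hSε, hrank⟩ := exists_add_eq_logb_rank_le_S0smooth hρ hε
  obtain ⟨B, hB, hcard⟩ := exists_finset_logb_card_eq_H0smooth (hprob hρ) hε'
  have hBR : ∑ z ∈ Bᶜ, (E z * R * (E z)ᴴ).trace.re ≤ ε' := by
    refine (Finset.sum_le_sum fun z _ => ?_).trans hB
    rw [Matrix.mul_add, Matrix.add_mul, trace_add, Complex.add_re]
    exact le_add_of_nonneg_right (hprob hS z)
  calc S0smooth (∑ z, E z * (R + S) * (E z)ᴴ) (ε + ε')
      ≤ Real.logb 2 (B.card * R.rank : ℕ) := S0smooth_sum_conj_add_le hE hR hS hSε hBR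
    _ ≤ Real.logb 2 B.card + Real.logb 2 R.rank := logb_natCast_mul_le one_lt_two _ _
    _ ≤ S0smooth (R + S) ε + H0smooth (fun z => (E z * (R + S) * (E z)ᴴ).trace.re) ε' := by
        rw [add_comm, hcard]
        exact add_le_add_left hrank _

end Measurement

/-- For a trace-preserving measurement `{E_z}` applied to `ρ_U`, with
post-measurement state `ρ_Ũ = Σ_z E_z ρ E_z†` and outcome distribution `P_Z`,
`S_0^{ε+ε'}(ρ_Ũ) ≤ S_0^ε(ρ_U) + H_0^{ε'}(P_Z)`. -/
theorem S0_of_measurement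
    {d : ℕ} {Z : Type*} [Fintype Z]
    (ρ : Matrix (Fin d) (Fin d) ℂ) (hρ : IsDensity ρ)
    (E : Z → Matrix (Fin d) (Fin d) ℂ) (hE : ∑ z, (E z)ᴴ * E z = 1)
    (ε ε' : ℝ) (hε : 0 < ε) (hε' : 0 < ε') :
    S0smooth (∑ z, E z * ρ * (E z)ᴴ) (ε + ε')
      ≤ S0smooth ρ ε
        + H0smooth (fun z => (E z * ρ * (E z)ᴴ).trace.re) ε' := by
  open scoped MatrixOrder in
  exact S0_of_measurement_general hE.le hρ.1 hε.le hε'.le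
end
end

section
/- Let σ_1,…,σ_d be density operators on ℂ^{d_U}, and let |φ_1⟩,…,|φ_d⟩ ∈ ℂ^{d_U} ⊗ ℂ^{d_W} be purifications of σ_1,…,σ_d such that the partial traces tr_U(|φ_i⟩⟨φ_i|) have mutually orthogonal supports. Let 𝓔 be a completely positive trace-preserving map from d_U×d_U matrices to d_V×d_V matrices, and let P_i be the orthogonal projector onto the support of (𝓔 ⊗ id_W)(|φ_i⟩⟨φ_i|). Fix n = (n_1,…,n_d) ∈ ℕ^d with n_1+⋯+n_d = n, set λ_i := n_i/n, define |ψ⟩ := (1/√(n!)) Σ_{π∈S_n} U_π (|φ_1⟩^{⊗n_1} ⊗ ⋯ ⊗ |φ_d⟩^{⊗n_d}), |φ^λ⟩ := Σ_{i=1}^d √(λ_i) |φ_i⟩, F_0 := Σ_{π∈S_n} U_π (P_1^{⊗n_1} ⊗ ⋯ ⊗ P_d^{⊗n_d}) U_π†, and N := n! · Π_{i=1}^d λ_i^{n_i}. Then (𝓔 ⊗ id_W)^{⊗n}(|ψ⟩⟨ψ|) = (1/N) · F_0 · ((𝓔 ⊗ id_W)(|φ^λ⟩⟨φ^λ|))^{⊗n}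 · F_0†. -/
open scoped Matrix Kronecker BigOperators ComplexOrder
open Matrix

noncomputable section

/-!
Write the output of a completely positive map `M ↦ ∑ a, A a * M * (A a)ᴴ` on `|v⟩⟨v|` as `B * Bᴴ`,
where the columns of `B` are the vectors `A a *ᵥ v`. This `B` is linear in `v` and turns tensor
products into tensor products, so both sides of the theorem have the form `X * Xᴴ`. Orthogonality
of the `W`-marginals survives a map acting on `U` alone, so `P i` fixes the `B` of `φ i` and kills
the `B` of every other `φ j`. Hence each term of `F₀` applied to the tensor power of the `B` of
`φ^λ` leaves only the product of the `φ i` in the order it prescribes, and the two `X` differ by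
the scalar `∏ k, √λ_(f k)`.
-/

theorem prod_comp_eq_prod_pow {α κ R : Type*} [Fintype α] [Fintype κ] [DecidableEq κ]
    [CommMonoid R] (f : α → κ) (g : κ → R) :
    ∏ k, g (f k) = ∏ i, g i ^ (Finset.univ.filter fun k => f k = i).card := by
  simp only [← Finset.prod_fiberwise' Finset.univ f, Finset.prod_const]

section Support

variable {m k l R : Type*} [Fintype m] [Fintype k] [PartialOrder R] [NonUnitalRing R] [StarRing R]
  [StarOrderedRing R] [NoZeroDivisors R]

theorem mul_eq_self_of_mul_mul_conjTranspose_eq_self {P : Matrix m m R} {B : Matrix m k R}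
    (h : P * (B * Bᴴ) = B * Bᴴ) : P * B = B := by
  have hdiff : (P * B - B) * Bᴴ = 0 := by rw [Matrix.sub_mul, Matrix.mul_assoc, h, sub_self]
  rw [← sub_eq_zero, ← self_mul_conjTranspose_eq_zero, conjTranspose_sub, conjTranspose_mul,
    Matrix.mul_sub, ← Matrix.mul_assoc, hdiff, Matrix.zero_mul, sub_zero]

theorem mul_eq_zero_of_conjTranspose_mul_eq_zero {p : Type*} {P : Matrix p m R}
    {B : Matrix m k R} {C : Matrix m l R} (hP : ∀ v, (B * Bᴴ) *ᵥ v = 0 → P *ᵥ v = 0)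
    (hBC : Bᴴ * C = 0) : P * C = 0 := by
  ext x y
  have hcol : (B * Bᴴ) *ᵥ C.col y = 0 :=
    (self_mul_conjTranspose_mulVec_eq_zero B _).2 (funext fun a => congrFun (congrFun hBC a) y)
  exact congrFun (hP _ hcol) x

end Support

theorem smul_mul_conjTranspose_smul {𝕜 m k : Type*} [RCLike 𝕜] [Fintype k] (c : 𝕜)
    (B : Matrix m k 𝕜) : (c • B) * (c • B)ᴴ = (‖c‖ ^ 2) • (B * Bᴴ) := by
  rw [conjTranspose_smul, Matrix.smul_mul, Matrix.mul_smul, smul_smul, RCLike.star_def,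
    RCLike.mul_conj, ← RCLike.ofReal_pow, RCLike.real_smul_eq_coe_smul (K := 𝕜)]

theorem outerPr_eq_vecMulVec {m : Type*} (v : m → ℂ) : outerPr v = vecMulVec v (star v) := rfl

theorem outerPr_smul {m : Type*} (c : ℂ) (v : m → ℂ) :
    outerPr (c • v) = (‖c‖ ^ 2) • outerPr v := by
  rw [outerPr_eq_vecMulVec, outerPr_eq_vecMulVec, star_smul, smul_vecMulVec, vecMulVec_smul,
    smul_smul, RCLike.star_def, RCLike.mul_conj, ← RCLike.ofReal_pow,
    RCLike.real_smul_eq_coe_smul (K := ℂ)]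

section Tensor

variable {n : ℕ} {a b c : Type*}

theorem tpow_mul_tpow [Fintype b] (M : Fin n → Matrix a b ℂ) (L : Fin n → Matrix b c ℂ) :
    tpow M * tpow L = tpow fun k => M k * L k := by
  classical
  ext p q
  simp [tpow, Matrix.mul_apply, ← Finset.prod_mul_distrib, Finset.prod_univ_sum,
    Fintype.piFinset_univ]

theorem conjTranspose_tpow (M : Fin n → Matrix a b ℂ) : (tpow M)ᴴ = tpow fun k => (M k)ᴴ := by
  ext p q
  simp [tpow]

theorem tpow_smul (z : Fin n → ℂ) (M : Fin n → Matrix a b ℂ) :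
    (tpow fun k => z k • M k) = (∏ k, z k) • tpow M := by
  ext p q
  simp [tpow, Finset.prod_mul_distrib]

theorem tpow_mulVec_vpow [Fintype b] (M : Fin n → Matrix a b ℂ) (v : Fin n → b → ℂ) :
    tpow M *ᵥ vpow v = vpow fun k => M k *ᵥ v k := by
  classical
  ext p
  simp [tpow, vpow, mulVec, dotProduct, ← Finset.prod_mul_distrib, Finset.prod_univ_sum,
    Fintype.piFinset_univ]

end Tensor

section Permutation

variable {n : ℕ} {a : Type*} [Fintype a] [DecidableEq a]

theorem permMat_mulVec_vpow (π : Equiv.Perm (Fin n)) (v : Fin n → a → ℂ) :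
    permMat π *ᵥ vpow v = vpow fun k => v (π⁻¹ k) := by
  ext p
  simp only [permMat, mulVec, dotProduct, of_apply, ite_mul, one_mul, zero_mul, Finset.sum_ite_eq',
    Finset.mem_univ, if_true, vpow, Function.comp_apply]
  exact Fintype.prod_equiv π _ _ (by simp)

theorem permMat_mul_tpow_mul_conjTranspose (π : Equiv.Perm (Fin n)) (M : Fin n → Matrix a a ℂ) :
    permMat π * tpow M * (permMat π)ᴴ = tpow fun k => M (π⁻¹ k) := by
  ext p q
  simp only [permMat, tpow, Matrix.mul_apply, conjTranspose_apply, of_apply, apply_ite star,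
    star_one, star_zero, mul_ite, ite_mul, one_mul, zero_mul, mul_one, mul_zero,
    Finset.sum_ite_eq', Finset.mem_univ, if_true, Function.comp_apply]
  exact Fintype.prod_equiv π _ _ (by simp)

end Permutation

section Symmetrization

variable {n : ℕ} {a b c κ : Type*}

/-- The symmetrization of a tensor product of matrices: the unnormalized sum of the products of
its factors in all orders. It stands for both `F₀` and, through `krausColumns`, for `ψ`; the factors
may be rectangular, so the sites are permuted by reindexing rather than by `permMat`. -/
def symmTpow (M : Fin n → Matrix a b ℂ) : Matrix (Fin n → a) (Fin n → b) ℂ :=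
  ∑ π : Equiv.Perm (Fin n), tpow fun k => M (π k)

theorem sum_permMat_mul_tpow_mul_conjTranspose [Fintype a] [DecidableEq a]
    (M : Fin n → Matrix a a ℂ) :
    ∑ π : Equiv.Perm (Fin n), permMat π * tpow M * (permMat π)ᴴ = symmTpow M := by
  simp only [permMat_mul_tpow_mul_conjTranspose]
  exact Equiv.sum_comp (Equiv.inv _) fun π : Equiv.Perm (Fin n) => tpow fun k => M (π k)

theorem symmTpow_mul_tpow [Fintype b] (M : Fin n → Matrix a b ℂ) (X : Matrix b c ℂ) :
    symmTpow M * tpow (fun _ : Fin n => X) = symmTpow fun k => M k * X := by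
  simp only [symmTpow, Matrix.sum_mul, tpow_mul_tpow]

theorem symmTpow_smul (z : Fin n → ℂ) (M : Fin n → Matrix a b ℂ) :
    (symmTpow fun k => z k • M k) = (∏ k, z k) • symmTpow M := by
  simp only [symmTpow, tpow_smul, Finset.smul_sum]
  exact Finset.sum_congr rfl fun π _ => by rw [Equiv.prod_comp π z]

theorem symmTpow_mul_tpow_sum_smul [Fintype b] [Fintype κ] {P : κ → Matrix a b ℂ}
    {B : κ → Matrix b c ℂ} {C : κ → Matrix a c ℂ} (hself : ∀ i, P i * B i = C i)
    (hother : ∀ i j, i ≠ j → P i * B j = 0) (z : κ → ℂ) (f : Fin n → κ) :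
    symmTpow (fun k => P (f k)) * tpow (fun _ : Fin n => ∑ i, z i • B i)
      = (∏ k, z (f k)) • symmTpow fun k => C (f k) := by
  have hsum (i : κ) : P i * ∑ j, z j • B j = z i • C i := by
    rw [Matrix.mul_sum, Fintype.sum_eq_single i, Matrix.mul_smul, hself]
    exact fun j hj => by rw [Matrix.mul_smul, hother i j hj.symm, smul_zero]
  simp only [symmTpow_mul_tpow, hsum, symmTpow_smul]

end Symmetrization

section Kraus

variable {n : ℕ} {ι κ m k : Type*} [Fintype k]

/-- The completely positive map with Kraus operators `A`. -/
def krausMap [Fintype ι] (A : ι → Matrix m k ℂ) : Matrix k k ℂ →ₗ[ℂ] Matrix m m ℂ where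
  toFun M := ∑ a, A a * M * (A a)ᴴ
  map_add' M L := by simp only [Matrix.mul_add, Matrix.add_mul, Finset.sum_add_distrib]
  map_smul' z M := by
    simp only [Matrix.mul_smul, Matrix.smul_mul, Finset.smul_sum, RingHom.id_apply]

/-- The matrix with columns `A a *ᵥ v`. It is a square root of the image of `|v⟩⟨v|` under
`krausMap A`, and it is linear in `v`. -/
def krausColumns (A : ι → Matrix m k ℂ) : (k → ℂ) →ₗ[ℂ] Matrix m ι ℂ where
  toFun v := of fun x a => (A a *ᵥ v) x
  map_add' v w := by ext; simp [mulVec_add]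
  map_smul' z v := by ext; simp [mulVec_smul]

/-- Kraus operators of the `n`-th tensor power of `krausMap A`. -/
def krausTpow (n : ℕ) (A : ι → Matrix m k ℂ) :
    (Fin n → ι) → Matrix (Fin n → m) (Fin n → k) ℂ :=
  fun α => tpow fun i => A (α i)

theorem krausMap_outerPr [Fintype ι] (A : ι → Matrix m k ℂ) (v : k → ℂ) :
    krausMap A (outerPr v) = krausColumns A v * (krausColumns A v)ᴴ := by
  have hterm (a : ι) : A a * outerPr v * (A a)ᴴ = vecMulVec (A a *ᵥ v) (star (A a *ᵥ v)) := by
    rw [outerPr_eq_vecMulVec, mul_vecMulVec, vecMulVec_mul, star_mulVec]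
  ext x y
  simp [krausMap, hterm, Matrix.sum_apply, Matrix.mul_apply, vecMulVec_apply, krausColumns]

theorem krausColumns_krausTpow_vpow (A : ι → Matrix m k ℂ) (v : Fin n → k → ℂ) :
    krausColumns (krausTpow n A) (vpow v) = tpow fun i => krausColumns A (v i) := by
  ext p α
  exact congrFun (tpow_mulVec_vpow (fun i => A (α i)) v) p

theorem krausColumns_krausTpow_sum_permMat [DecidableEq k] (A : ι → Matrix m k ℂ)
    (v : Fin n → k → ℂ) :
    krausColumns (krausTpow n A) (∑ π : Equiv.Perm (Fin n), permMat π *ᵥ vpow v)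
      = symmTpow fun i => krausColumns A (v i) := by
  simp only [permMat_mulVec_vpow, map_sum, krausColumns_krausTpow_vpow]
  exact Equiv.sum_comp (Equiv.inv _)
    fun π : Equiv.Perm (Fin n) => tpow fun i => krausColumns A (v (π i))

theorem tpow_krausMap_outerPr [Fintype ι] (A : ι → Matrix m k ℂ) (v : k → ℂ) :
    tpow (fun _ : Fin n => krausMap A (outerPr v))
      = tpow (fun _ : Fin n => krausColumns A v) * (tpow fun _ : Fin n => krausColumns A v)ᴴ := by
  rw [conjTranspose_tpow, tpow_mul_tpow, krausMap_outerPr]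

theorem symmTpow_mul_tpow_krausMap_mul_conjTranspose [Fintype ι] [Fintype κ] [Fintype m]
    [DecidableEq k] {A : ι → Matrix m k ℂ} {φ : κ → k → ℂ} {P : κ → Matrix m m ℂ}
    (hself : ∀ i, P i * krausColumns A (φ i) = krausColumns A (φ i))
    (hother : ∀ i j, i ≠ j → P i * krausColumns A (φ j) = 0) (z : κ → ℂ) (f : Fin n → κ) :
    symmTpow (fun j => P (f j)) * tpow (fun _ : Fin n => krausMap A (outerPr (∑ i, z i • φ i))) *
        (symmTpow fun j => P (f j))ᴴ
      = (∏ j, ‖z (f j)‖ ^ 2) • krausMap (krausTpow n A)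
        (outerPr (∑ π : Equiv.Perm (Fin n), permMat π *ᵥ vpow fun j => φ (f j))) := by
  have hproj : symmTpow (fun j => P (f j)) * tpow (fun _ : Fin n => krausColumns A (∑ i, z i • φ i))
      = (∏ j, z (f j)) • symmTpow fun j => krausColumns A (φ (f j)) := by
    simp only [map_sum, map_smul]
    exact symmTpow_mul_tpow_sum_smul hself hother z f
  rw [tpow_krausMap_outerPr, ← Matrix.mul_assoc, Matrix.mul_assoc, ← conjTranspose_mul, hproj,
    smul_mul_conjTranspose_smul, norm_prod, Finset.prod_pow, krausMap_outerPr,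
    krausColumns_krausTpow_sum_permMat]

end Kraus

section Bipartite

variable {ι U V W : Type*} [Fintype U]

theorem ptraceL_outerPr_vec (X : Matrix W U ℂ) : ptraceL (outerPr (vec X)) = X * Xᴴ := by
  ext i j
  simp [ptraceL, outerPr, Matrix.mul_apply]

variable [Fintype W] [DecidableEq W]

/-- Kraus operators of `𝓔 ⊗ id_W`, where `𝓔 = krausMap K`. -/
def ampliate (W : Type*) [DecidableEq W] (K : ι → Matrix V U ℂ) : ι → Matrix (V × W) (U × W) ℂ :=
  fun a => K a ⊗ₖ (1 : Matrix W W ℂ)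

theorem conjTranspose_krausColumns_ampliate_mul_eq_zero [Fintype V] (K : ι → Matrix V U ℂ)
    {φ χ : U × W → ℂ} (h : ptraceL (outerPr φ) * ptraceL (outerPr χ) = 0) :
    (krausColumns (ampliate W K) φ)ᴴ * krausColumns (ampliate W K) χ = 0 := by
  obtain ⟨X, rfl⟩ := vec_bijective.surjective φ
  obtain ⟨Y, rfl⟩ := vec_bijective.surjective χ
  have hXY : Xᴴ * Y = 0 := by
    rwa [ptraceL_outerPr_vec, ptraceL_outerPr_vec, self_mul_conjTranspose_mul_eq_zero,
      mul_self_mul_conjTranspose_eq_zero] at h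
  ext a b
  calc ((krausColumns (ampliate W K) (vec X))ᴴ * krausColumns (ampliate W K) (vec Y)) a b
      = star (ampliate W K a *ᵥ vec X) ⬝ᵥ (ampliate W K b *ᵥ vec Y) := rfl
    _ = ((X * (K a)ᵀ)ᴴ * (Y * (K b)ᵀ)).trace := by
      simp only [ampliate, kronecker_mulVec_vec, Matrix.one_mul, star_vec_dotProduct_vec]
    _ = 0 := by
      rw [conjTranspose_mul, Matrix.mul_assoc, ← Matrix.mul_assoc Xᴴ, hXY, Matrix.zero_mul,
        Matrix.mul_zero, trace_zero]

end Bipartite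

theorem symmetrized_state_eq_projected_product_general
    {n : ℕ} {ι κ U V W : Type*} [Fintype ι] [Fintype κ] [DecidableEq κ] [Fintype U] [DecidableEq U]
    [Fintype V] [DecidableEq V] [Fintype W] [DecidableEq W]
    {φ : κ → U × W → ℂ}
    (hortho : ∀ i j, i ≠ j → ptraceL (outerPr (φ i)) * ptraceL (outerPr (φ j)) = 0)
    {K : ι → Matrix V U ℂ} {P : κ → Matrix (V × W) (V × W) ℂ}
    (hPsupp : ∀ i, P i * krausMap (ampliate W K) (outerPr (φ i))
      = krausMap (ampliate W K) (outerPr (φ i)))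
    (hPker : ∀ i x, krausMap (ampliate W K) (outerPr (φ i)) *ᵥ x = 0 → P i *ᵥ x = 0)
    {nv : κ → ℕ} {f : Fin n → κ}
    (hf : ∀ i, (Finset.univ.filter fun k => f k = i).card = nv i)
    {lam : κ → ℝ} (hlam_nonneg : ∀ i, 0 ≤ lam i) (hlam_ne : ∀ k, lam (f k) ≠ 0) :
    krausMap (krausTpow n (ampliate W K)) (outerPr ((Real.sqrt n.factorial : ℂ)⁻¹ •
        ∑ π : Equiv.Perm (Fin n), permMat π *ᵥ vpow fun k => φ (f k)))
      = (1 / (n.factorial * ∏ i, lam i ^ nv i)) •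
        ((∑ π : Equiv.Perm (Fin n), permMat π * tpow (fun k => P (f k)) * (permMat π)ᴴ) *
          tpow (fun _ : Fin n => krausMap (ampliate W K)
            (outerPr fun x => ∑ i, (Real.sqrt (lam i) : ℂ) * φ i x)) *
          (∑ π : Equiv.Perm (Fin n), permMat π * tpow (fun k => P (f k)) * (permMat π)ᴴ)ᴴ) := by
  simp only [krausMap_outerPr (ampliate W K) (φ _)] at hPsupp hPker
  have hself (i : κ) :
      P i * krausColumns (ampliate W K) (φ i) = krausColumns (ampliate W K) (φ i) :=
    mul_eq_self_of_mul_mul_conjTranspose_eq_self (hPsupp i)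
  have hother (i j : κ) (hij : i ≠ j) : P i * krausColumns (ampliate W K) (φ j) = 0 :=
    mul_eq_zero_of_conjTranspose_mul_eq_zero (hPker i)
      (conjTranspose_krausColumns_ampliate_mul_eq_zero K (hortho i j hij))
  have hsuper : (fun x => ∑ i, (Real.sqrt (lam i) : ℂ) * φ i x)
      = ∑ i, (Real.sqrt (lam i) : ℂ) • φ i := by
    ext x; simp
  have hnorm (y : ℝ) (hy : 0 ≤ y) : ‖(Real.sqrt y : ℂ)‖ ^ 2 = y := by
    rw [Complex.norm_real, Real.norm_of_nonneg (Real.sqrt_nonneg y), Real.sq_sqrt hy]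
  have hweight : ∏ k, ‖(Real.sqrt (lam (f k)) : ℂ)‖ ^ 2 = ∏ i, lam i ^ nv i := by
    rw [prod_comp_eq_prod_pow f fun i => ‖(Real.sqrt (lam i) : ℂ)‖ ^ 2]
    simp only [hnorm _ (hlam_nonneg _), hf]
  have hne : ∏ i, lam i ^ nv i ≠ 0 := by
    simp only [← hf, ← prod_comp_eq_prod_pow f lam]
    exact Finset.prod_ne_zero_iff.2 fun k _ => hlam_ne k
  rw [sum_permMat_mul_tpow_mul_conjTranspose, hsuper,
    symmTpow_mul_tpow_krausMap_mul_conjTranspose hself hother, hweight, outerPr_smul,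
    LinearMap.map_smul_of_tower, smul_smul, norm_inv, inv_pow, hnorm _ (Nat.cast_nonneg _)]
  congr 1
  field_simp

/-- With purifications `φ_i` of density operators `σ_i` having mutually
orthogonal `W`-supports, a CPTP map `𝓔` (given by Kraus operators `K`), support projectors
`P_i` of `(𝓔 ⊗ id_W)(|φ_i⟩⟨φ_i|)`, the symmetrized vector `ψ`, the averaged vector `φ^λ`,
the symmetrizing projector-sum `F₀`, and `N = n!·Π λ_i^{n_i}`, one has
`(𝓔 ⊗ id_W)^{⊗n}(|ψ⟩⟨ψ|) = (1/N) F₀ ((𝓔 ⊗ id_W)(|φ^λ⟩⟨φ^λ|))^{⊗n} F₀†`. -/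
theorem symmetrized_state_eq_projected_product
    {d dU dV dW n : ℕ} {ι : Type*} [Fintype ι]
    (σ : Fin d → Matrix (Fin dU) (Fin dU) ℂ) (hσ : ∀ i, IsDensity (σ i))
    (φ : Fin d → (Fin dU × Fin dW) → ℂ) (hφ : ∀ i, IsPurification (φ i) (σ i))
    (hortho : ∀ i j, i ≠ j → ptraceL (outerPr (φ i)) * ptraceL (outerPr (φ j)) = 0)
    (K : ι → Matrix (Fin dV) (Fin dU) ℂ) (hK : ∑ a, (K a)ᴴ * K a = 1)
    -- the channel 𝓔 ⊗ id_W
    (chanW : Matrix (Fin dU × Fin dW) (Fin dU × Fin dW) ℂ →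
      Matrix (Fin dV × Fin dW) (Fin dV × Fin dW) ℂ)
    (hchanW : chanW = fun M => ∑ a,
      (K a ⊗ₖ (1 : Matrix (Fin dW) (Fin dW) ℂ)) * M * (K a ⊗ₖ (1 : Matrix (Fin dW) (Fin dW) ℂ))ᴴ)
    -- the channel (𝓔 ⊗ id_W)^{⊗ n}
    (chanN : Matrix (Fin n → Fin dU × Fin dW) (Fin n → Fin dU × Fin dW) ℂ →
      Matrix (Fin n → Fin dV × Fin dW) (Fin n → Fin dV × Fin dW) ℂ)
    (hchanN : chanN = fun M => ∑ α : Fin n → ι,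
      tpow (fun i => K (α i) ⊗ₖ (1 : Matrix (Fin dW) (Fin dW) ℂ)) * M *
        (tpow (fun i => K (α i) ⊗ₖ (1 : Matrix (Fin dW) (Fin dW) ℂ)))ᴴ)
    -- support projectors P_i of (𝓔 ⊗ id_W)(|φ_i⟩⟨φ_i|)
    (P : Fin d → Matrix (Fin dV × Fin dW) (Fin dV × Fin dW) ℂ)
    (hPproj : ∀ i, (P i).IsHermitian ∧ P i * P i = P i)
    (hPsupp : ∀ i, P i * chanW (outerPr (φ i)) = chanW (outerPr (φ i)))
    (hPker : ∀ i (v : Fin dV × Fin dW → ℂ),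
      chanW (outerPr (φ i)) *ᵥ v = 0 → P i *ᵥ v = 0)
    -- the type (n₁, …, n_d) with Σ n_i = n, realized by a labelling f of the n sites
    (nv : Fin d → ℕ) (hnv : ∑ i, nv i = n)
    (f : Fin n → Fin d)
    (hf : ∀ i, (Finset.univ.filter fun k => f k = i).card = nv i)
    -- the (unnormalized) symmetrized vector ψ
    (ψ : (Fin n → Fin dU × Fin dW) → ℂ)
    (hψ : ψ = ((Real.sqrt n.factorial : ℂ))⁻¹ •
      ∑ π : Equiv.Perm (Fin n), permMat π *ᵥ vpow (fun k => φ (f k)))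
    -- the vector φ^λ with λ_i = n_i / n
    (φlam : (Fin dU × Fin dW) → ℂ)
    (hφlam : φlam = fun x => ∑ i, (Real.sqrt ((nv i : ℝ) / n) : ℂ) * φ i x)
    -- the operator F₀
    (F₀ : Matrix (Fin n → Fin dV × Fin dW) (Fin n → Fin dV × Fin dW) ℂ)
    (hF₀ : F₀ = ∑ π : Equiv.Perm (Fin n), permMat π * tpow (fun k => P (f k)) * (permMat π)ᴴ)
    (N : ℝ) (hN : N = (n.factorial : ℝ) * ∏ i, ((nv i : ℝ) / n) ^ (nv i)) :
    chanN (outerPr ψ)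
      = (1 / N) • (F₀ * tpow (fun _ => chanW (outerPr φlam)) * F₀ᴴ) := by
  subst hchanW hchanN hψ hφlam hF₀ hN
  have hnv_ne (k : Fin n) : nv (f k) ≠ 0 := by
    rw [← hf]
    exact Finset.card_ne_zero_of_mem (Finset.mem_filter.2 ⟨Finset.mem_univ k, rfl⟩)
  exact symmetrized_state_eq_projected_product_general hortho hPsupp hPker hf
    (fun i => by positivity)
    fun k => div_ne_zero (mod_cast hnv_ne k) (mod_cast (Fin.pos k).ne')
end
end
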